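/- arXiv:2312.08969 — 2 statements merged into one kernel-verified Lean document; each statement's English description precedes it below -/
import Mathlib

section
/- Let k ∈ (0,1), α ∈ (0, K(k)), q := e^{−πK'(k)/K(k)}, H(x) := θ₁(πx/(2K(k)); q), Θ(x) := θ₄(πx/(2K(k)); q), β := [1 − 2(1+k)²·sn(α;k)²/(1 + k·sn(α;k)²)²]·Θ(2α)/Θ(0), γ := Θ(2α)/Θ(0). For fixed ξ ∈ ℝ define F(η) := (H(K(k))/Θ(K(k)))·( H(ξ+2α)e^{−2η} + H(ξ−2α)e^{2η} + 2βH(ξ) ) / ( Θ(ξ+2α)e^{−2η} + Θ(ξ−2α)e^{2η} + 2γΘ(ξ) ). Then F(η) → k·sn(ξ − 2α; k) as η → +∞ and F(η) → k·sn(ξ + 2α; k) as η → −∞. In particular, the dark breather approaches translates of the snoidal background, shifted by ∓2α, far from its core. -/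
noncomputable section

/-- The complete elliptic integral of the first kind. -/
def Kcomp (k : ℝ) : ℝ :=
  ∫ θ in (0 : ℝ)..(Real.pi / 2), (Real.sqrt (1 - k ^ 2 * Real.sin θ ^ 2))⁻¹

/-- The Jacobi theta function `θ₁(y;q) = 2·Σ_{n≥1} (−1)^{n−1} q^{(n−1/2)²} sin((2n−1)y)`
(the sum runs over `n : ℕ`, representing the index `n + 1 ≥ 1`). -/
def theta1R (q y : ℝ) : ℝ :=
  2 * ∑' n : ℕ, (-1 : ℝ) ^ n * q ^ (((n : ℝ) + 1 / 2) ^ 2) *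
    Real.sin ((2 * (n : ℝ) + 1) * y)

/-- The Jacobi theta function `θ₄(y;q) = 1 + 2·Σ_{n≥1} (−1)ⁿ q^{n²} cos(2ny)`
(the sum runs over `n : ℕ`, representing the index `n + 1 ≥ 1`). -/
def theta4R (q y : ℝ) : ℝ :=
  1 + 2 * ∑' n : ℕ, (-1 : ℝ) ^ (n + 1) * q ^ ((n + 1) ^ 2) *
    Real.cos (2 * ((n : ℝ) + 1) * y)

/-- The nome `q = e^{−πK'(k)/K(k)}` with `K'(k) = K(√(1−k²))`. -/
def nome (k : ℝ) : ℝ :=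
  Real.exp (-(Real.pi * Kcomp (Real.sqrt (1 - k ^ 2)) / Kcomp k))

/-- `H(x) = θ₁(πx/(2K(k)); q)`. -/
def Hf (k x : ℝ) : ℝ := theta1R (nome k) (Real.pi * x / (2 * Kcomp k))

/-- `Θ(x) = θ₄(πx/(2K(k)); q)`. -/
def THf (k x : ℝ) : ℝ := theta4R (nome k) (Real.pi * x / (2 * Kcomp k))

/-- The parameter `β` of the dark breather. -/
def betaPar (k : ℝ) (sn : ℝ → ℝ) (α : ℝ) : ℝ :=
  (1 - 2 * (1 + k) ^ 2 * (sn α) ^ 2 / (1 + k * (sn α) ^ 2) ^ 2) * (THf k (2 * α) / THf k 0)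

/-- The parameter `γ` of the dark breather. -/
def gammaPar (k α : ℝ) : ℝ := THf k (2 * α) / THf k 0

/-- The dark-breather profile as a function of `η` at fixed `ξ`. -/
def Fquot (k : ℝ) (sn : ℝ → ℝ) (α ξ η : ℝ) : ℝ :=
  (Hf k (Kcomp k) / THf k (Kcomp k)) *
    (Hf k (ξ + 2 * α) * Real.exp (-(2 * η)) + Hf k (ξ - 2 * α) * Real.exp (2 * η)
      + 2 * betaPar k sn α * Hf k ξ) /
    (THf k (ξ + 2 * α) * Real.exp (-(2 * η)) + THf k (ξ - 2 * α) * Real.exp (2 * η)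
      + 2 * gammaPar k α * THf k ξ)

/-!
Write the nome as `e^{-πt}`, `t > 0`. Multiplying two theta series and regrouping the double sum by
parity expresses products of theta functions at `2t` through theta functions at `t`; this yields
the square identities and the Wronskians, so the quotients `θ₁/θ₄`, `θ₂/θ₄`, `θ₃/θ₄` solve the
Jacobi system with modulus `θ₂(0)²/θ₃(0)²` after rescaling the variable, and `sn` is a theta
quotient by uniqueness of solutions. The rescaling factor is `2K` and equals `πθ₃(0)²`, because
the ratio of the two is invariant under `t ↦ 2t` and tends to `1` at infinity. The modular
transformation `t ↦ 1/t` then gives `K'/K = t`, and strict monotonicity of `K'/K` shows that every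
modulus arises from `t = K'/K`. This proves `k sn = (H(K)/Θ(K)) H/Θ`. Since `Θ > 0`, the dominant
exponentials in numerator and denominator of the breather determine its limits.
-/

namespace DarkBreather

open Complex HurwitzZeta Filter
open scoped Real Topology

/-! ### Theta functions with characteristic -/

lemma exp_pi_mul_I_mul_int (n : ℤ) : cexp (π * I * n) = (-1 : ℂ) ^ n := by
  rw [← exp_pi_mul_I, ← exp_int_mul, mul_comm]

lemma jacobiTheta₂_term_add_half_mul (m n : ℤ) (u v σ : ℂ) :
    jacobiTheta₂_term m (u + 1 / 2) σ * jacobiTheta₂_term n (v + 1 / 2) σ =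
      (-1 : ℂ) ^ (m + n) * (jacobiTheta₂_term m u σ * jacobiTheta₂_term n v σ) := by
  rw [← exp_pi_mul_I_mul_int]
  simp only [jacobiTheta₂_term, ← Complex.exp_add]
  push_cast
  ring_nf

lemma jacobiTheta₂_term_two_mul (m n : ℤ) (u v σ : ℂ) :
    jacobiTheta₂_term m (u + v) (2 * σ) * jacobiTheta₂_term n (u - v) (2 * σ) =
      jacobiTheta₂_term (m + n) u σ * jacobiTheta₂_term (m - n) v σ := by
  simp only [jacobiTheta₂_term, ← Complex.exp_add]
  push_cast
  ring_nf

lemma tsum_add_sub_eq_tsum_even (f : ℤ × ℤ → ℂ) :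
    ∑' p : ℤ × ℤ, f (p.1 + p.2, p.1 - p.2) =
      ∑' p : ℤ × ℤ, 1 / 2 * (1 + (-1 : ℂ) ^ (p.1 + p.2)) * f p := by
  let g : ℤ × ℤ → ℤ × ℤ := fun p ↦ (p.1 + p.2, p.1 - p.2)
  have g_injective : Function.Injective g := by
    rintro ⟨a, b⟩ ⟨c, d⟩ h
    simp only [g, Prod.mk.injEq] at h
    ext <;> dsimp only <;> lia
  rw [← g_injective.tsum_eq (f := fun p ↦ 1 / 2 * (1 + (-1 : ℂ) ^ (p.1 + p.2)) * f p)]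
  · refine tsum_congr fun p ↦ ?_
    have hp : Even (p.1 + p.2 + (p.1 - p.2)) := ⟨p.1, by ring⟩
    simp only [g, hp.neg_one_zpow]
    ring
  · rintro ⟨a, b⟩ hab
    rcases Int.even_or_odd (a + b) with ⟨m, hm⟩ | hodd
    · exact ⟨(m, a - m), by simp only [g, Prod.mk.injEq]; lia⟩
    · simp [hodd.neg_one_zpow] at hab

lemma jacobiTheta₂_mul_jacobiTheta₂ {σ : ℂ} (hσ : 0 < σ.im) (u v : ℂ) :
    jacobiTheta₂ (u + v) (2 * σ) * jacobiTheta₂ (u - v) (2 * σ) =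
      1 / 2 * (jacobiTheta₂ u σ * jacobiTheta₂ v σ +
        jacobiTheta₂ (u + 1 / 2) σ * jacobiTheta₂ (v + 1 / 2) σ) := by
  have h2σ : 0 < (2 * σ).im := by simpa using hσ
  have summable_norm {τ : ℂ} (hτ : 0 < τ.im) (z : ℂ) :
      Summable fun n ↦ ‖jacobiTheta₂_term n z τ‖ :=
    ((summable_jacobiTheta₂_term_iff z τ).mpr hτ).norm
  have summable_mul (z w : ℂ) := summable_mul_of_summable_norm
    (summable_norm hσ z) (summable_norm hσ w)
  unfold jacobiTheta₂
  rw [tsum_mul_tsum_of_summable_norm (summable_norm h2σ _) (summable_norm h2σ _),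
    tsum_mul_tsum_of_summable_norm (summable_norm hσ _) (summable_norm hσ _),
    tsum_mul_tsum_of_summable_norm (summable_norm hσ _) (summable_norm hσ _),
    ← (summable_mul u v).tsum_add (summable_mul _ _), ← tsum_mul_left]
  simp only [jacobiTheta₂_term_two_mul, jacobiTheta₂_term_add_half_mul]
  rw [tsum_add_sub_eq_tsum_even fun p ↦ jacobiTheta₂_term p.1 u σ * jacobiTheta₂_term p.2 v σ]
  exact tsum_congr fun p ↦ by ring

/-- The theta function with characteristic `a`, that is
`∑ₙ exp (π i (n + a)² τ + 2 π i (n + a) z)`. The classical `θ₃` has `a = 0` and `θ₂` has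
`a = 1 / 2`; the variable is normalised so that `θ₃` has period `1`. -/
def thetaChar (a z τ : ℂ) : ℂ :=
  cexp (π * I * a ^ 2 * τ + 2 * π * I * a * z) * jacobiTheta₂ (z + a * τ) τ

lemma thetaChar_zero (z τ : ℂ) : thetaChar 0 z τ = jacobiTheta₂ z τ := by
  simp [thetaChar]

lemma thetaChar_one (z τ : ℂ) : thetaChar 1 z τ = jacobiTheta₂ z τ := by
  rw [thetaChar, one_mul, jacobiTheta₂_add_left', ← mul_assoc, ← Complex.exp_add]
  ring_nf
  simp

lemma differentiable_thetaChar (a : ℂ) {τ : ℂ} (hτ : 0 < τ.im) :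
    Differentiable ℂ fun z ↦ thetaChar a z τ := by
  have : Differentiable ℂ fun z ↦ jacobiTheta₂ z τ :=
    fun z ↦ differentiableAt_jacobiTheta₂_fst z hτ
  unfold thetaChar
  fun_prop

lemma thetaChar_mul_thetaChar {σ : ℂ} (hσ : 0 < σ.im) (a b u v : ℂ) :
    thetaChar a (u + v) (2 * σ) * thetaChar b (u - v) (2 * σ) =
      1 / 2 * (thetaChar (a + b) u σ * thetaChar (a - b) v σ + cexp (-(2 * π * I * a)) *
        (thetaChar (a + b) (u + 1 / 2) σ * thetaChar (a - b) (v + 1 / 2) σ)) := by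
  have key := jacobiTheta₂_mul_jacobiTheta₂ hσ (u + (a + b) * σ) (v + (a - b) * σ)
  unfold thetaChar
  rw [show u + v + a * (2 * σ) = u + (a + b) * σ + (v + (a - b) * σ) by ring,
    show u - v + b * (2 * σ) = u + (a + b) * σ - (v + (a - b) * σ) by ring,
    mul_mul_mul_comm, key, add_right_comm u, add_right_comm v, mul_mul_mul_comm _ _ (cexp _),
    mul_mul_mul_comm (cexp (_ + 2 * π * I * (a + b) * (u + 1 / 2)))]
  simp only [← Complex.exp_add]
  rw [← mul_assoc (cexp (-(2 * π * I * a))), ← Complex.exp_add]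
  ring_nf

/-! ### The four real theta functions -/

/-- The theta function `θ₁` of nome `e^{-πt}`, in the variable for which it changes sign under
`x ↦ x + 1`. -/
def theta₁ (t x : ℝ) : ℝ := theta1R (rexp (-(π * t))) (π * x)

/-- The theta function `θ₄` of nome `e^{-πt}`, in the variable for which it has period `1`. -/
def theta₄ (t x : ℝ) : ℝ := theta4R (rexp (-(π * t))) (π * x)

/-- The theta function `θ₂`, the half-period shift of `θ₁`. -/
def theta₂ (t x : ℝ) : ℝ := theta₁ t (x + 1 / 2)

/-- The theta function `θ₃`, the half-period shift of `θ₄`. -/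
def theta₃ (t x : ℝ) : ℝ := theta₄ t (x + 1 / 2)

lemma theta₁_neg (t x : ℝ) : theta₁ t (-x) = -theta₁ t x := by
  simp [theta₁, theta1R, tsum_neg]

lemma theta₁_zero (t : ℝ) : theta₁ t 0 = 0 := by
  simp [theta₁, theta1R]

lemma theta₁_add_one (t x : ℝ) : theta₁ t (x + 1) = -theta₁ t x := by
  have (n : ℕ) : Real.sin ((2 * n + 1) * (π * (x + 1))) = -Real.sin ((2 * n + 1) * (π * x)) := by
    rw [← Real.sin_add_pi, ← Real.sin_add_nat_mul_two_pi ((2 * n + 1) * (π * x) + π) n]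
    ring_nf
  simp [theta₁, theta1R, this, tsum_neg]

lemma theta₄_add_one (t x : ℝ) : theta₄ t (x + 1) = theta₄ t x := by
  have (n : ℕ) : Real.cos (2 * (n + 1) * (π * (x + 1))) = Real.cos (2 * (n + 1) * (π * x)) := by
    rw [← Real.cos_add_nat_mul_two_pi (2 * (n + 1) * (π * x)) (n + 1)]
    push_cast
    ring_nf
  simp only [theta₄, theta4R, this]

lemma theta₂_add_half (t x : ℝ) : theta₂ t (x + 1 / 2) = -theta₁ t x := by
  rw [theta₂, ← theta₁_add_one]
  ring_nf

lemma theta₃_add_half (t x : ℝ) : theta₃ t (x + 1 / 2) = theta₄ t x := by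
  rw [theta₃, ← theta₄_add_one t x]
  ring_nf

lemma theta₂_neg (t x : ℝ) : theta₂ t (-x) = theta₂ t x := by
  rw [theta₂, show -x + 1 / 2 = -(x - 1 / 2) by ring, theta₁_neg, ← theta₁_add_one, theta₂]
  ring_nf

lemma theta₂_eq_tsum (t x : ℝ) : theta₂ t x =
    ∑' n : ℕ, 2 * rexp (-(π * t * (n + 1 / 2) ^ 2)) * Real.cos ((2 * n + 1) * (π * x)) := by
  have hsin (n : ℕ) : Real.sin ((2 * n + 1) * (π * (x + 1 / 2))) =
      (-1) ^ n * Real.cos ((2 * n + 1) * (π * x)) := by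
    rw [← Real.cos_add_nat_mul_pi, ← Real.sin_add_pi_div_two]
    ring_nf
  rw [theta₂, theta₁, theta1R, ← tsum_mul_left]
  refine tsum_congr fun n ↦ ?_
  have hsign : ((-1 : ℝ) ^ n) * (-1) ^ n = 1 := by rw [← mul_pow]; simp
  rw [hsin, ← Real.exp_mul, neg_mul]
  linear_combination (2 * rexp (-(π * t * (n + 1 / 2) ^ 2)) * Real.cos ((2 * n + 1) * (π * x))) *
    hsign

variable {t : ℝ}

lemma hasSum_thetaChar_half (ht : 0 < t) (x : ℝ) :
    HasSum (fun n : ℕ ↦ ((2 * rexp (-(π * t * (n + 1 / 2) ^ 2)) *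
      Real.cos ((2 * n + 1) * (π * x)) : ℝ) : ℂ)) (thetaChar (1 / 2) x (I * t)) := by
  have hterm (n : ℤ) : cexp (π * I * (1 / 2) ^ 2 * (I * t) + 2 * π * I * (1 / 2) * x) *
      jacobiTheta₂_term n (x + 1 / 2 * (I * t)) (I * t) =
      cexp (-(π * t * (n + 1 / 2) ^ 2)) * cexp ((2 * n + 1) * (π * x) * I) := by
    rw [jacobiTheta₂_term, ← Complex.exp_add, ← Complex.exp_add]
    congr 1
    linear_combination (π * t * (n + 1 / 2) ^ 2) * I_sq
  have hsum := (hasSum_jacobiTheta₂_term (x + 1 / 2 * (I * t)) (τ := I * t)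
    (by simpa)).mul_left (cexp (π * I * (1 / 2) ^ 2 * (I * t) + 2 * π * I * (1 / 2) * x))
  refine hsum.nat_add_neg_add_one.congr_fun fun n ↦ ?_
  rw [hterm, hterm]
  push_cast
  rw [Complex.cos]
  ring_nf

lemma ofReal_theta₂ (ht : 0 < t) (x : ℝ) : (theta₂ t x : ℂ) = thetaChar (1 / 2) x (I * t) := by
  rw [theta₂_eq_tsum, ofReal_tsum]
  exact (hasSum_thetaChar_half ht x).tsum_eq

lemma hasSum_theta₂ (ht : 0 < t) (x : ℝ) :
    HasSum (fun n : ℕ ↦ 2 * rexp (-(π * t * (n + 1 / 2) ^ 2)) * Real.cos ((2 * n + 1) * (π * x)))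
      (theta₂ t x) := by
  rw [← hasSum_ofReal, ofReal_theta₂ ht]
  exact hasSum_thetaChar_half ht x

lemma theta₃_eq_cosKernel (ht : 0 < t) (x : ℝ) : theta₃ t x = cosKernel x t := by
  suffices 2 * ∑' n : ℕ, (-1 : ℝ) ^ (n + 1) * rexp (-(π * t)) ^ ((n + 1) ^ 2) *
      Real.cos (2 * (n + 1) * (π * (x + 1 / 2))) = cosKernel x t - 1 by
    rw [theta₃, theta₄, theta4R, this, add_sub_cancel]
  rw [← (hasSum_nat_cosKernel₀ x ht).tsum_eq, ← tsum_mul_left]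
  refine tsum_congr fun n ↦ ?_
  have hcos : Real.cos (2 * (n + 1) * (π * (x + 1 / 2))) =
      (-1) ^ (n + 1) * Real.cos (2 * π * x * (n + 1)) := by
    rw [← Real.cos_add_nat_mul_pi]
    push_cast
    ring_nf
  have hexp : rexp (-(π * t)) ^ ((n + 1) ^ 2) = rexp (-π * (n + 1) ^ 2 * t) := by
    rw [← Real.exp_nat_mul]
    push_cast
    ring_nf
  have hsign : ((-1 : ℝ) ^ (n + 1)) * (-1) ^ (n + 1) = 1 := by rw [← mul_pow]; simp
  rw [hcos, hexp]
  linear_combination (2 * rexp (-π * (n + 1) ^ 2 * t) * Real.cos (2 * π * x * (n + 1))) * hsign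

lemma ofReal_theta₃ (ht : 0 < t) (x : ℝ) : (theta₃ t x : ℂ) = jacobiTheta₂ x (I * t) := by
  rw [theta₃_eq_cosKernel ht, cosKernel_def]

lemma ofReal_theta₄ (ht : 0 < t) (x : ℝ) :
    (theta₄ t x : ℂ) = jacobiTheta₂ (x + 1 / 2) (I * t) := by
  rw [← theta₃_add_half, ofReal_theta₃ ht]
  push_cast
  rfl

lemma theta₂_zero_eq_evenKernel (ht : 0 < t) :
    theta₂ t 0 = evenKernel ((1 / 2 : ℝ) : UnitAddCircle) t := by
  rw [← ofReal_inj, ofReal_theta₂ ht, evenKernel_def, thetaChar]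
  push_cast
  congr 2
  · linear_combination (π * t / 4) * I_sq
  · ring

lemma theta₄_zero_eq_cosKernel (ht : 0 < t) :
    theta₄ t 0 = cosKernel ((1 / 2 : ℝ) : UnitAddCircle) t := by
  rw [← theta₃_add_half, zero_add, theta₃_eq_cosKernel ht]

/-! ### Positivity and modular transformation -/

lemma evenKernel_pos (a : UnitAddCircle) (ht : 0 < t) : 0 < evenKernel a t := by
  induction a using QuotientAddGroup.induction_on with | H a =>
  have h := hasSum_int_evenKernel a ht
  exact h.tsum_eq ▸ h.summable.tsum_pos (fun _ ↦ (Real.exp_pos _).le) 0 (Real.exp_pos _)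

/- The series of `cosKernel` has terms of both signs; after the modular transformation all terms
are positive. -/
lemma cosKernel_pos (a : UnitAddCircle) (ht : 0 < t) : 0 < cosKernel a t := by
  have h := evenKernel_pos a (one_div_pos.mpr ht)
  rw [evenKernel_functional_equation, one_div_one_div] at h
  exact pos_of_mul_pos_right h (by positivity)

lemma theta₃_pos (ht : 0 < t) (x : ℝ) : 0 < theta₃ t x :=
  theta₃_eq_cosKernel ht x ▸ cosKernel_pos _ ht

lemma theta₄_pos (ht : 0 < t) (x : ℝ) : 0 < theta₄ t x :=
  theta₃_add_half t x ▸ theta₃_pos ht _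

lemma theta₂_zero_pos (ht : 0 < t) : 0 < theta₂ t 0 :=
  theta₂_zero_eq_evenKernel ht ▸ evenKernel_pos _ ht

lemma cosKernel_one_div (a : UnitAddCircle) (ht : 0 < t) :
    cosKernel a (1 / t) = √t * evenKernel a t := by
  rw [evenKernel_functional_equation, ← Real.sqrt_eq_rpow]
  field_simp

lemma theta₃_one_div_zero (ht : 0 < t) : theta₃ (1 / t) 0 = √t * theta₃ t 0 := by
  have h := cosKernel_one_div ((0 : ℝ) : UnitAddCircle) ht
  rwa [← theta₃_eq_cosKernel (one_div_pos.mpr ht), AddCircle.coe_zero,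
    evenKernel_eq_cosKernel_of_zero, ← AddCircle.coe_zero, ← theta₃_eq_cosKernel ht] at h

lemma theta₄_one_div_zero (ht : 0 < t) : theta₄ (1 / t) 0 = √t * theta₂ t 0 := by
  rw [theta₄_zero_eq_cosKernel (one_div_pos.mpr ht), theta₂_zero_eq_evenKernel ht,
    cosKernel_one_div _ ht]

lemma theta₂_one_div_zero (ht : 0 < t) : theta₂ (1 / t) 0 = √t * theta₄ t 0 := by
  have h := theta₄_one_div_zero (one_div_pos.mpr ht)
  rw [one_div_one_div, Real.sqrt_div zero_le_one, Real.sqrt_one] at h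
  rw [h]
  field_simp

/-! ### Duplication formulas -/

lemma exp_neg_two_mul_pi_mul_I_mul_half : cexp (-(2 * π * I * (1 / 2))) = -1 := by
  rw [show -(2 * π * I * (1 / 2)) = -(π * I) by ring, Complex.exp_neg, exp_pi_mul_I, inv_neg_one]

lemma theta₃_mul_theta₃ (ht : 0 < t) (u v : ℝ) :
    theta₃ (2 * t) (u + v) * theta₃ (2 * t) (u - v) =
      1 / 2 * (theta₃ t u * theta₃ t v + theta₄ t u * theta₄ t v) := by
  have h2t : 0 < 2 * t := by positivity
  rw [← ofReal_inj]
  push_cast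
  rw [ofReal_theta₃ h2t, ofReal_theta₃ h2t, ofReal_theta₃ ht, ofReal_theta₃ ht,
    ofReal_theta₄ ht, ofReal_theta₄ ht]
  push_cast
  rw [mul_left_comm I 2]
  exact jacobiTheta₂_mul_jacobiTheta₂ (by simpa) _ _

lemma theta₂_mul_theta₂ (ht : 0 < t) (u v : ℝ) :
    theta₂ (2 * t) (u + v) * theta₂ (2 * t) (u - v) =
      1 / 2 * (theta₃ t u * theta₃ t v - theta₄ t u * theta₄ t v) := by
  have h2t : 0 < 2 * t := by positivity
  have key := thetaChar_mul_thetaChar (σ := I * t) (by simpa) (1 / 2) (1 / 2) u v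
  norm_num only [exp_neg_two_mul_pi_mul_I_mul_half, sub_self, thetaChar_zero, thetaChar_one] at key
  rw [← ofReal_inj]
  push_cast
  rw [ofReal_theta₂ h2t, ofReal_theta₂ h2t, ofReal_theta₃ ht, ofReal_theta₃ ht,
    ofReal_theta₄ ht, ofReal_theta₄ ht]
  push_cast
  rw [mul_left_comm I 2, key]
  ring

lemma theta₂_mul_theta₃ (ht : 0 < t) (u v : ℝ) :
    theta₂ (2 * t) (u + v) * theta₃ (2 * t) (u - v) =
      1 / 2 * (theta₂ t u * theta₂ t v - theta₁ t u * theta₁ t v) := by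
  have h2t : 0 < 2 * t := by positivity
  have key := thetaChar_mul_thetaChar (σ := I * t) (by simpa) (1 / 2) 0 u v
  simp only [exp_neg_two_mul_pi_mul_I_mul_half, add_zero, sub_zero, thetaChar_zero] at key
  have hθ₁ (x : ℝ) : (theta₁ t x : ℂ) = -thetaChar (1 / 2) (x + 1 / 2) (I * t) := by
    rw [← neg_neg (theta₁ t x), ← theta₂_add_half, ofReal_neg, ofReal_theta₂ ht]
    push_cast
    rfl
  rw [← ofReal_inj]
  push_cast
  rw [ofReal_theta₂ h2t, ofReal_theta₃ h2t, ofReal_theta₂ ht, ofReal_theta₂ ht, hθ₁, hθ₁]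
  push_cast
  rw [mul_left_comm I 2, key]
  ring

lemma theta₄_mul_theta₄ (ht : 0 < t) (u v : ℝ) :
    theta₄ (2 * t) (u + v) * theta₄ (2 * t) (u - v) =
      1 / 2 * (theta₄ t u * theta₃ t v + theta₃ t u * theta₄ t v) := by
  have h := theta₃_mul_theta₃ ht (u + 1 / 2) v
  rwa [add_right_comm, add_sub_right_comm, theta₃_add_half, theta₃_add_half, theta₃_add_half,
    ← theta₃] at h

lemma theta₁_mul_theta₁ (ht : 0 < t) (u v : ℝ) :
    theta₁ (2 * t) (u + v) * theta₁ (2 * t) (u - v) =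
      1 / 2 * (theta₄ t u * theta₃ t v - theta₃ t u * theta₄ t v) := by
  have h := theta₂_mul_theta₂ ht (u + 1 / 2) v
  rwa [add_right_comm, add_sub_right_comm, theta₂_add_half, theta₂_add_half, theta₃_add_half,
    ← theta₃, neg_mul_neg] at h

lemma theta₁_mul_theta₄ (ht : 0 < t) (u v : ℝ) :
    theta₁ (2 * t) (u + v) * theta₄ (2 * t) (u - v) =
      1 / 2 * (theta₁ t u * theta₂ t v + theta₂ t u * theta₁ t v) := by
  have h := theta₂_mul_theta₃ ht (u + 1 / 2) v
  rw [add_right_comm, add_sub_right_comm, theta₂_add_half, theta₃_add_half, theta₂_add_half,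
    ← theta₂] at h
  linear_combination -h

/-! ### Identities between squares -/

lemma theta₃_sq_two_mul (ht : 0 < t) (x : ℝ) : theta₃ (2 * t) x ^ 2 =
    1 / 2 * (theta₃ t x * theta₃ t 0 + theta₄ t x * theta₄ t 0) := by
  rw [← theta₃_mul_theta₃ ht, add_zero, sub_zero, sq]

lemma theta₂_sq_two_mul (ht : 0 < t) (x : ℝ) : theta₂ (2 * t) x ^ 2 =
    1 / 2 * (theta₃ t x * theta₃ t 0 - theta₄ t x * theta₄ t 0) := by
  rw [← theta₂_mul_theta₂ ht, add_zero, sub_zero, sq]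

lemma theta₄_sq_two_mul (ht : 0 < t) (x : ℝ) : theta₄ (2 * t) x ^ 2 =
    1 / 2 * (theta₄ t x * theta₃ t 0 + theta₃ t x * theta₄ t 0) := by
  rw [← theta₄_mul_theta₄ ht, add_zero, sub_zero, sq]

lemma theta₁_sq_two_mul (ht : 0 < t) (x : ℝ) : theta₁ (2 * t) x ^ 2 =
    1 / 2 * (theta₄ t x * theta₃ t 0 - theta₃ t x * theta₄ t 0) := by
  rw [← theta₁_mul_theta₁ ht, add_zero, sub_zero, sq]

lemma theta₂_mul_theta₃_two_mul (ht : 0 < t) (x : ℝ) :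
    2 * (theta₂ (2 * t) x * theta₃ (2 * t) x) = theta₂ t x * theta₂ t 0 := by
  have h := theta₂_mul_theta₃ ht x 0
  rw [add_zero, sub_zero, theta₁_zero] at h
  linear_combination 2 * h

lemma theta₄_zero_sq_mul_theta₃_sq (ht : 0 < t) (x : ℝ) :
    theta₄ t 0 ^ 2 * theta₃ t x ^ 2 =
      theta₃ t 0 ^ 2 * theta₄ t x ^ 2 - theta₂ t 0 ^ 2 * theta₁ t x ^ 2 := by
  obtain ⟨s, rfl⟩ : ∃ s, t = 2 * s := ⟨t / 2, by ring⟩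
  have hs : 0 < s := by linarith
  simp only [theta₁_sq_two_mul hs, theta₂_sq_two_mul hs, theta₃_sq_two_mul hs,
    theta₄_sq_two_mul hs]
  ring

lemma theta₃_zero_sq_mul_theta₃_sq (ht : 0 < t) (x : ℝ) :
    theta₃ t 0 ^ 2 * theta₃ t x ^ 2 =
      theta₄ t 0 ^ 2 * theta₄ t x ^ 2 + theta₂ t 0 ^ 2 * theta₂ t x ^ 2 := by
  obtain ⟨s, rfl⟩ : ∃ s, t = 2 * s := ⟨t / 2, by ring⟩
  have hs : 0 < s := by linarith
  simp only [theta₂_sq_two_mul hs, theta₃_sq_two_mul hs, theta₄_sq_two_mul hs]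
  ring

/-! ### The zeros of `θ₂` -/

lemma le_theta₂ (ht : 0 < t) (x : ℝ) :
    2 * rexp (-(π * t / 4)) * (Real.cos (π * x) - rexp (-(π * t)) / (1 - rexp (-(π * t)))) ≤
      theta₂ t x := by
  set q := rexp (-(π * t)) with hq
  have hq1 : q < 1 := Real.exp_lt_one_iff.mpr (neg_lt_zero.mpr (by positivity))
  have htail := (hasSum_nat_add_iff' 1).mpr (hasSum_theta₂ ht x)
  have hgeom := (hasSum_geometric_of_lt_one (Real.exp_pos _).le hq1).mul_left
    (-(2 * rexp (-(π * t / 4)) * q))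
  have hterm (n : ℕ) : -(2 * rexp (-(π * t / 4)) * q) * q ^ n ≤
      2 * rexp (-(π * t * ((n + 1 : ℕ) + 1 / 2) ^ 2)) *
        Real.cos ((2 * (n + 1 : ℕ) + 1) * (π * x)) := by
    have hdecay :
        rexp (-(π * t * ((n + 1 : ℕ) + 1 / 2) ^ 2)) ≤ rexp (-(π * t / 4)) * q * q ^ n := by
      rw [hq, ← Real.exp_nat_mul, ← Real.exp_add, ← Real.exp_add, Real.exp_le_exp]
      have : 0 ≤ π * t * (n ^ 2 + 2 * n + 1) := by positivity
      push_cast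
      linarith
    have hcos := Real.neg_one_le_cos ((2 * (n + 1 : ℕ) + 1) * (π * x))
    nlinarith [Real.exp_pos (-(π * t * ((n + 1 : ℕ) + 1 / 2) ^ 2))]
  have hle := hasSum_le hterm hgeom htail
  have hfirst : rexp (-(π * t * ((0 : ℕ) + 1 / 2) ^ 2)) = rexp (-(π * t / 4)) := by
    congr 1
    push_cast
    ring
  rw [Finset.sum_range_one, hfirst, Nat.cast_zero, mul_zero, zero_add, one_mul] at hle
  linear_combination hle

lemma eventually_theta₂_pos {x : ℝ} (hx : x ∈ Set.Ioo (-(1 / 2)) (1 / 2)) :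
    ∀ᶠ t in atTop, 0 < theta₂ t x := by
  have hcos : 0 < Real.cos (π * x) :=
    Real.cos_pos_of_mem_Ioo ⟨by nlinarith [hx.1, Real.pi_pos], by nlinarith [hx.2, Real.pi_pos]⟩
  have hq : Tendsto (fun t ↦ rexp (-(π * t))) atTop (𝓝 0) :=
    Real.tendsto_exp_neg_atTop_nhds_zero.comp
      (tendsto_id.const_mul_atTop Real.pi_pos)
  have hlim : Tendsto (fun t ↦ rexp (-(π * t)) / (1 - rexp (-(π * t)))) atTop
      (𝓝 0) := by
    simpa only [sub_zero, zero_div, Pi.div_def] using hq.div (hq.const_sub 1) (by simp)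
  filter_upwards [hlim.eventually_lt_const hcos, eventually_gt_atTop 0] with t hlt ht
  exact (mul_pos (by positivity) (sub_pos.mpr hlt)).trans_le (le_theta₂ ht x)

lemma theta₂_pos_of_two_mul (ht : 0 < t) {x : ℝ} (h : 0 < theta₂ (2 * t) x) :
    0 < theta₂ t x := by
  refine pos_of_mul_pos_left ?_ (theta₂_zero_pos ht).le
  rw [← theta₂_mul_theta₃_two_mul ht]
  have := theta₃_pos (mul_pos two_pos ht) x
  positivity

lemma theta₂_pos (ht : 0 < t) {x : ℝ} (hx : x ∈ Set.Ioo (-(1 / 2)) (1 / 2)) :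
    0 < theta₂ t x := by
  have htop : Tendsto (fun n : ℕ ↦ (2 : ℝ) ^ n * t) atTop atTop :=
    (tendsto_pow_atTop_atTop_of_one_lt one_lt_two).atTop_mul_const ht
  obtain ⟨n, hn⟩ := (htop.eventually (eventually_theta₂_pos hx)).exists
  induction n with
  | zero => simpa using hn
  | succ n ih =>
    rw [pow_succ', mul_assoc] at hn
    exact ih (theta₂_pos_of_two_mul (by positivity) hn)

/-! ### Wronskians of theta functions -/

lemma differentiable_of_ofReal_eq {f : ℂ → ℂ} {g : ℝ → ℝ} (hf : Differentiable ℂ f)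
    (h : ∀ x : ℝ, (g x : ℂ) = f x) : Differentiable ℝ g := by
  have hg : g = fun x : ℝ ↦ (f x).re := funext fun x ↦ by rw [← h, ofReal_re]
  exact hg ▸ fun x ↦ (hf x).hasDerivAt.real_of_complex.differentiableAt

lemma differentiable_theta₂ (ht : 0 < t) : Differentiable ℝ (theta₂ t) :=
  differentiable_of_ofReal_eq (differentiable_thetaChar (1 / 2) (by simpa)) (ofReal_theta₂ ht)

lemma differentiable_theta₃ (ht : 0 < t) : Differentiable ℝ (theta₃ t) :=
  differentiable_of_ofReal_eq (fun z ↦ differentiableAt_jacobiTheta₂_fst z (by simpa))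
    (ofReal_theta₃ ht)

lemma differentiable_theta₁ (ht : 0 < t) : Differentiable ℝ (theta₁ t) := by
  have h : theta₁ t = fun x ↦ -theta₂ t (x + 1 / 2) := by simp only [theta₂_add_half, neg_neg]
  have := differentiable_theta₂ ht
  rw [h]
  fun_prop

lemma differentiable_theta₄ (ht : 0 < t) : Differentiable ℝ (theta₄ t) := by
  have h : theta₄ t = fun x ↦ theta₃ t (x + 1 / 2) := by simp only [theta₃_add_half]
  have := differentiable_theta₃ ht
  rw [h]
  fun_prop

lemma deriv_theta₂ (t x : ℝ) : deriv (theta₂ t) x = deriv (theta₁ t) (x + 1 / 2) :=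
  deriv_comp_add_const (theta₁ t) (1 / 2) x

lemma deriv_theta₃ (t x : ℝ) : deriv (theta₃ t) x = deriv (theta₄ t) (x + 1 / 2) :=
  deriv_comp_add_const (theta₄ t) (1 / 2) x

lemma deriv_zero_of_even {f : ℝ → ℝ} (hf : f.Even) : deriv f 0 = 0 := by
  have h := deriv_comp_neg f 0
  rw [funext hf, neg_zero] at h
  linarith

/- Differentiate the duplication formula for `θ₁(x + v) θ₄(x - v)` in `v` at `v = 0`. -/
lemma wronskian_theta₁_theta₄_two_mul (ht : 0 < t) (x : ℝ) :
    deriv (theta₁ (2 * t)) x * theta₄ (2 * t) x - theta₁ (2 * t) x * deriv (theta₄ (2 * t)) x =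
      1 / 2 * (theta₂ t x * deriv (theta₁ t) 0) := by
  have h2t : 0 < 2 * t := by positivity
  have hadd : HasDerivAt (fun v ↦ theta₁ (2 * t) (x + v)) (deriv (theta₁ (2 * t)) x) 0 := by
    simpa using (differentiable_theta₁ h2t (x + 0)).hasDerivAt.comp_const_add x 0
  have hsub : HasDerivAt (fun v ↦ theta₄ (2 * t) (x - v)) (-deriv (theta₄ (2 * t)) x) 0 := by
    simpa using (differentiable_theta₄ h2t (x - 0)).hasDerivAt.comp_const_sub x 0
  have hleft := hadd.mul hsub
  have hright := (((differentiable_theta₂ ht 0).hasDerivAt.const_mul (theta₁ t x)).add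
    ((differentiable_theta₁ ht 0).hasDerivAt.const_mul (theta₂ t x))).const_mul (1 / 2)
  rw [deriv_zero_of_even (theta₂_neg t)] at hright
  have heq := hleft.unique (hright.congr_of_eventuallyEq
    (Eventually.of_forall fun v ↦ theta₁_mul_theta₄ ht x v))
  simp only [add_zero, sub_zero] at heq
  linear_combination heq

lemma wronskian_theta₁_theta₄ (ht : 0 < t) (x : ℝ) :
    (deriv (theta₁ t) x * theta₄ t x - theta₁ t x * deriv (theta₄ t) x) *
        (theta₂ t 0 * theta₃ t 0) =
      deriv (theta₁ t) 0 * theta₄ t 0 * (theta₂ t x * theta₃ t x) := by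
  obtain ⟨s, rfl⟩ : ∃ s, t = 2 * s := ⟨t / 2, by ring⟩
  have hs : 0 < s := by linarith
  have hW := wronskian_theta₁_theta₄_two_mul hs x
  have hW₀ := wronskian_theta₁_theta₄_two_mul hs 0
  have hP := theta₂_mul_theta₃_two_mul hs x
  have hP₀ := theta₂_mul_theta₃_two_mul hs 0
  rw [theta₁_zero, zero_mul, sub_zero] at hW₀
  rw [hW, hW₀]
  linear_combination (1 / 4 * theta₂ s x * deriv (theta₁ s) 0) * hP₀ -
    (1 / 4 * theta₂ s 0 * deriv (theta₁ s) 0) * hP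

lemma wronskian_theta₂_theta₃ (ht : 0 < t) (x : ℝ) :
    (deriv (theta₂ t) x * theta₃ t x - theta₂ t x * deriv (theta₃ t) x) *
        (theta₂ t 0 * theta₃ t 0) =
      -(deriv (theta₁ t) 0 * theta₄ t 0 * (theta₁ t x * theta₄ t x)) := by
  have h := wronskian_theta₁_theta₄ ht (x + 1 / 2)
  rw [theta₂_add_half, theta₃_add_half] at h
  rw [deriv_theta₂, deriv_theta₃]
  unfold theta₂ theta₃ at h ⊢
  linear_combination h

/- Differentiate `θ₄(0)² θ₃² + θ₂(0)² θ₁² = θ₃(0)² θ₄²` and divide by `θ₃`. -/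
lemma wronskian_theta₃_theta₄ (ht : 0 < t) (x : ℝ) :
    (deriv (theta₃ t) x * theta₄ t x - theta₃ t x * deriv (theta₄ t) x) *
        (theta₃ t 0 * theta₄ t 0) =
      -(deriv (theta₁ t) 0 * theta₂ t 0 * (theta₁ t x * theta₂ t x)) := by
  have hsq := theta₄_zero_sq_mul_theta₃_sq ht x
  have hsq' : theta₄ t 0 ^ 2 * (theta₃ t x * deriv (theta₃ t) x) =
      theta₃ t 0 ^ 2 * (theta₄ t x * deriv (theta₄ t) x) -
        theta₂ t 0 ^ 2 * (theta₁ t x * deriv (theta₁ t) x) := by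
    have hleft := ((differentiable_theta₃ ht x).hasDerivAt.pow 2).const_mul (theta₄ t 0 ^ 2)
    have hright := (((differentiable_theta₄ ht x).hasDerivAt.pow 2).const_mul (theta₃ t 0 ^ 2)).sub
      (((differentiable_theta₁ ht x).hasDerivAt.pow 2).const_mul (theta₂ t 0 ^ 2))
    have heq := hleft.unique (hright.congr_of_eventuallyEq
      (Eventually.of_forall fun y ↦ theta₄_zero_sq_mul_theta₃_sq ht y))
    norm_num at heq
    linear_combination 1 / 2 * heq
  have hW := wronskian_theta₁_theta₄ ht x
  have hne : theta₃ t x * theta₄ t 0 ≠ 0 :=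
    mul_ne_zero (theta₃_pos ht x).ne' (theta₄_pos ht 0).ne'
  refine mul_left_cancel₀ hne ?_
  linear_combination theta₃ t 0 * theta₄ t x * hsq' - theta₃ t 0 * deriv (theta₄ t) x * hsq -
    theta₂ t 0 * theta₁ t x * hW

/- Plücker relation `θ₃ W(θ₂, θ₄) = θ₄ W(θ₂, θ₃) + θ₂ W(θ₃, θ₄)`. -/
lemma wronskian_theta₂_theta₄ (ht : 0 < t) (x : ℝ) :
    (deriv (theta₂ t) x * theta₄ t x - theta₂ t x * deriv (theta₄ t) x) *
        (theta₂ t 0 * theta₄ t 0) =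
      -(deriv (theta₁ t) 0 * theta₃ t 0 * (theta₁ t x * theta₃ t x)) := by
  have hW₂₃ := wronskian_theta₂_theta₃ ht x
  have hW₃₄ := wronskian_theta₃_theta₄ ht x
  have hsq := theta₃_zero_sq_mul_theta₃_sq ht x
  have hne : theta₃ t x * theta₃ t 0 ≠ 0 :=
    mul_ne_zero (theta₃_pos ht x).ne' (theta₃_pos ht 0).ne'
  refine mul_left_cancel₀ hne ?_
  linear_combination theta₄ t 0 * theta₄ t x * hW₂₃ + theta₂ t 0 * theta₂ t x * hW₃₄ +
    deriv (theta₁ t) 0 * theta₁ t x * hsq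

/-! ### The complete elliptic integral -/

section CompleteIntegral

variable {k l : ℝ}

lemma one_sub_sq_mul_sin_sq_pos (hk : k ^ 2 < 1) (θ : ℝ) : 0 < 1 - k ^ 2 * Real.sin θ ^ 2 := by
  nlinarith [Real.sin_sq_le_one θ, sq_nonneg k]

lemma continuous_inv_sqrt_one_sub_sq_mul_sin_sq (hk : k ^ 2 < 1) :
    Continuous fun θ ↦ (√(1 - k ^ 2 * Real.sin θ ^ 2))⁻¹ :=
  Continuous.inv₀ (by fun_prop) fun θ ↦ (Real.sqrt_pos.mpr (one_sub_sq_mul_sin_sq_pos hk θ)).ne'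

lemma pi_div_two_le_Kcomp (hk : k ^ 2 < 1) : π / 2 ≤ Kcomp k := by
  have hle : ∫ _ in (0 : ℝ)..π / 2, (1 : ℝ) ≤ Kcomp k := by
    refine intervalIntegral.integral_mono_on (by positivity) (by simp)
      ((continuous_inv_sqrt_one_sub_sq_mul_sin_sq hk).intervalIntegrable _ _) fun θ _ ↦ ?_
    refine (one_le_inv₀ (Real.sqrt_pos.mpr (one_sub_sq_mul_sin_sq_pos hk θ))).mpr ?_
    exact Real.sqrt_le_one.mpr (sub_le_self 1 (by positivity))
  simpa using hle

lemma Kcomp_le (hk : k ^ 2 < 1) : Kcomp k ≤ π / 2 * (√(1 - k ^ 2))⁻¹ := by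
  have hle : Kcomp k ≤ ∫ _ in (0 : ℝ)..π / 2, (√(1 - k ^ 2))⁻¹ := by
    refine intervalIntegral.integral_mono_on (by positivity)
      ((continuous_inv_sqrt_one_sub_sq_mul_sin_sq hk).intervalIntegrable _ _) (by simp)
      fun θ _ ↦ ?_
    refine inv_anti₀ (Real.sqrt_pos.mpr (sub_pos.mpr hk)) (Real.sqrt_le_sqrt ?_)
    nlinarith [Real.sin_sq_le_one θ, sq_nonneg k]
  simpa using hle

lemma Kcomp_pos (hk : k ^ 2 < 1) : 0 < Kcomp k :=
  Real.pi_div_two_pos.trans_le (pi_div_two_le_Kcomp hk)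

lemma tendsto_Kcomp_nhds_zero : Tendsto Kcomp (𝓝 0) (𝓝 (π / 2)) := by
  have hsq : ∀ᶠ k : ℝ in 𝓝 0, k ^ 2 < 1 :=
    ((continuous_pow 2).tendsto (0 : ℝ)).eventually_lt_const (by norm_num)
  have hupper : Tendsto (fun k : ℝ ↦ π / 2 * (√(1 - k ^ 2))⁻¹) (𝓝 0) (𝓝 (π / 2)) := by
    have : ContinuousAt (fun k : ℝ ↦ π / 2 * (√(1 - k ^ 2))⁻¹) 0 :=
      ContinuousAt.mul (by fun_prop) (ContinuousAt.inv₀ (by fun_prop) (by simp))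
    simpa using this.tendsto
  exact tendsto_of_tendsto_of_tendsto_of_le_of_le' tendsto_const_nhds hupper
    (hsq.mono fun _ ↦ pi_div_two_le_Kcomp) (hsq.mono fun _ ↦ Kcomp_le)

lemma Kcomp_lt_Kcomp (hl : l ^ 2 < 1) (hkl : k ^ 2 < l ^ 2) : Kcomp k < Kcomp l := by
  have hk : k ^ 2 < 1 := hkl.trans hl
  refine intervalIntegral.integral_lt_integral_of_continuousOn_of_le_of_exists_lt (by positivity)
    (continuous_inv_sqrt_one_sub_sq_mul_sin_sq hk).continuousOn
    (continuous_inv_sqrt_one_sub_sq_mul_sin_sq hl).continuousOn (fun θ _ ↦ ?_)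
    ⟨π / 2, ⟨by positivity, le_rfl⟩, ?_⟩
  · refine inv_anti₀ (Real.sqrt_pos.mpr (one_sub_sq_mul_sin_sq_pos hl θ)) (Real.sqrt_le_sqrt ?_)
    gcongr
  · refine inv_strictAnti₀ (Real.sqrt_pos.mpr (one_sub_sq_mul_sin_sq_pos hl _))
      (Real.sqrt_lt_sqrt (one_sub_sq_mul_sin_sq_pos hl _).le ?_)
    rw [Real.sin_pi_div_two]
    linarith

lemma strictAntiOn_Kcomp_ratio :
    StrictAntiOn (fun k ↦ Kcomp √(1 - k ^ 2) / Kcomp k) (Set.Ioo 0 1) := by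
  intro k hk l hl hkl
  have hsq : k ^ 2 < l ^ 2 := by gcongr; exact hk.1.le
  have hl' : l ^ 2 < 1 := by nlinarith [hl.1, hl.2]
  have hk0 : 0 < k ^ 2 := pow_pos hk.1 2
  have hcompl : Kcomp √(1 - l ^ 2) < Kcomp √(1 - k ^ 2) := by
    apply Kcomp_lt_Kcomp <;> simp only [Real.sq_sqrt, sub_nonneg, hl'.le, (hsq.trans hl').le] <;>
      linarith
  have hpos : 0 ≤ Kcomp √(1 - k ^ 2) :=
    (Kcomp_pos (by rw [Real.sq_sqrt (by linarith)]; linarith)).le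
  exact div_lt_div₀ hcompl (Kcomp_lt_Kcomp hl' hsq).le hpos (Kcomp_pos (hsq.trans hl'))

end CompleteIntegral

/-! ### The system of Jacobi elliptic functions -/

/-- `sn`, `cn`, `dn` are the Jacobi elliptic functions of modulus `k`, characterised as the
solution of their first-order system of differential equations. -/
structure IsJacobiElliptic (k : ℝ) (sn cn dn : ℝ → ℝ) : Prop where
  hasDerivAt_sn (x : ℝ) : HasDerivAt sn (cn x * dn x) x
  hasDerivAt_cn (x : ℝ) : HasDerivAt cn (-(sn x * dn x)) x
  hasDerivAt_dn (x : ℝ) : HasDerivAt dn (-(k ^ 2 * sn x * cn x)) x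
  sn_zero : sn 0 = 0
  cn_zero : cn 0 = 1
  dn_zero : dn 0 = 1

namespace IsJacobiElliptic

variable {k : ℝ} {sn cn dn sn' cn' dn' : ℝ → ℝ}

lemma sn_sq_add_cn_sq (h : IsJacobiElliptic k sn cn dn) (x : ℝ) : sn x ^ 2 + cn x ^ 2 = 1 := by
  have hderiv (y : ℝ) : HasDerivAt (fun z ↦ sn z ^ 2 + cn z ^ 2) 0 y :=
    (((h.hasDerivAt_sn y).fun_pow 2).fun_add ((h.hasDerivAt_cn y).fun_pow 2)).congr_deriv
      (by push_cast; ring)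
  simpa [h.sn_zero, h.cn_zero] using is_const_of_deriv_eq_zero
    (fun y ↦ (hderiv y).differentiableAt) (fun y ↦ (hderiv y).deriv) x 0

lemma sq_mul_sn_sq_add_dn_sq (h : IsJacobiElliptic k sn cn dn) (x : ℝ) :
    k ^ 2 * sn x ^ 2 + dn x ^ 2 = 1 := by
  have hderiv (y : ℝ) : HasDerivAt (fun z ↦ k ^ 2 * sn z ^ 2 + dn z ^ 2) 0 y :=
    ((((h.hasDerivAt_sn y).fun_pow 2).const_mul _).fun_add
      ((h.hasDerivAt_dn y).fun_pow 2)).congr_deriv (by push_cast; ring)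
  simpa [h.sn_zero, h.dn_zero] using is_const_of_deriv_eq_zero
    (fun y ↦ (hderiv y).differentiableAt) (fun y ↦ (hderiv y).deriv) x 0

lemma mem_closedBall (h : IsJacobiElliptic k sn cn dn) (x : ℝ) :
    (sn x, cn x, dn x) ∈ Metric.closedBall (0 : ℝ × ℝ × ℝ) 1 := by
  have hsc := h.sn_sq_add_cn_sq x
  have hsd := h.sq_mul_sn_sq_add_dn_sq x
  simp only [mem_closedBall_zero_iff, Prod.norm_def, Real.norm_eq_abs, sup_le_iff,
    ← sq_le_one_iff_abs_le_one]
  refine ⟨?_, ?_, ?_⟩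
  · linarith [sq_nonneg (cn x)]
  · linarith [sq_nonneg (sn x)]
  · linarith [mul_nonneg (sq_nonneg k) (sq_nonneg (sn x))]

lemma sn_unique (h : IsJacobiElliptic k sn cn dn) (h' : IsJacobiElliptic k sn' cn' dn') :
    sn = sn' := by
  let v : ℝ × ℝ × ℝ → ℝ × ℝ × ℝ :=
    fun p ↦ (p.2.1 * p.2.2, -(p.1 * p.2.2), -(k ^ 2 * p.1 * p.2.1))
  have hv : ContDiff ℝ 1 v := by fun_prop
  obtain ⟨L, hL⟩ := (hv.locallyLipschitz.locallyLipschitzOn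
    (s := Metric.closedBall 0 1)).exists_lipschitzOnWith_of_compact (isCompact_closedBall 0 1)
  have hsol {s c d : ℝ → ℝ} (hj : IsJacobiElliptic k s c d) (x : ℝ) :
      HasDerivAt (fun y ↦ (s y, c y, d y)) (v (s x, c x, d x)) x :=
    (hj.hasDerivAt_sn x).prodMk ((hj.hasDerivAt_cn x).prodMk (hj.hasDerivAt_dn x))
  have huniq := ODE_solution_unique_univ (v := fun _ ↦ v) (s := fun _ ↦ Metric.closedBall 0 1)
    (t₀ := 0) (fun _ ↦ hL) (fun x ↦ ⟨hsol h x, h.mem_closedBall x⟩)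
    (fun x ↦ ⟨hsol h' x, h'.mem_closedBall x⟩)
    (by simp only [h.sn_zero, h.cn_zero, h.dn_zero, h'.sn_zero, h'.cn_zero, h'.dn_zero])
  exact funext fun x ↦ congrArg Prod.fst (congrFun huniq x)

lemma hasDerivAt_incomplete_integral_arcsin_sn (h : IsJacobiElliptic k sn cn dn) (hk : k ^ 2 < 1)
    {x : ℝ} (hcn : 0 < cn x) (hdn : 0 < dn x) :
    HasDerivAt (fun y ↦ ∫ θ in (0 : ℝ)..Real.arcsin (sn y), (√(1 - k ^ 2 * Real.sin θ ^ 2))⁻¹)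
      1 x := by
  have hsc := h.sn_sq_add_cn_sq x
  have hsd := h.sq_mul_sn_sq_add_dn_sq x
  have habs : |sn x| < 1 := (sq_lt_one_iff_abs_lt_one _).mp (by nlinarith)
  obtain ⟨hgt, hlt⟩ := abs_lt.mp habs
  have harcsin := (Real.hasDerivAt_arcsin hgt.ne' hlt.ne).comp x (h.hasDerivAt_sn x)
  have hint := ((continuous_inv_sqrt_one_sub_sq_mul_sin_sq hk).integral_hasStrictDerivAt 0
    (Real.arcsin (sn x))).hasDerivAt
  refine (hint.comp x harcsin).congr_deriv ?_
  rw [Real.sin_arcsin hgt.le hlt.le, show 1 - sn x ^ 2 = cn x ^ 2 by linarith,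
    show 1 - k ^ 2 * sn x ^ 2 = dn x ^ 2 by linarith, Real.sqrt_sq hcn.le, Real.sqrt_sq hdn.le]
  field_simp

lemma Kcomp_eq (h : IsJacobiElliptic k sn cn dn) (hk : k ^ 2 < 1) {L : ℝ} (hL : 0 < L)
    (hsnL : sn L = 1) (hcn : ∀ x ∈ Set.Ioo 0 L, 0 < cn x) (hdn : ∀ x ∈ Set.Ioo 0 L, 0 < dn x) :
    Kcomp k = L := by
  let G : ℝ → ℝ := fun φ ↦ ∫ θ in (0 : ℝ)..φ, (√(1 - k ^ 2 * Real.sin θ ^ 2))⁻¹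
  have hG : Continuous G := intervalIntegral.continuous_primitive
    (continuous_inv_sqrt_one_sub_sq_mul_sin_sq hk).intervalIntegrable 0
  have hsn : Continuous sn :=
    continuous_iff_continuousAt.mpr fun x ↦ (h.hasDerivAt_sn x).continuousAt
  obtain ⟨c, -, hslope⟩ := exists_hasDerivAt_eq_slope (fun x ↦ G (Real.arcsin (sn x)))
    (fun _ ↦ 1) hL (hG.comp (Real.continuous_arcsin.comp hsn)).continuousOn fun x hx ↦
      h.hasDerivAt_incomplete_integral_arcsin_sn hk (hcn x hx) (hdn x hx)
  have hG0 : G 0 = 0 := intervalIntegral.integral_same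
  rw [hsnL, h.sn_zero, Real.arcsin_one, Real.arcsin_zero, hG0, sub_zero, sub_zero,
    eq_div_iff hL.ne', one_mul] at hslope
  exact hslope.symm

end IsJacobiElliptic

/-! ### Jacobi elliptic functions as theta quotients -/

/-- The modulus `k = θ₂(0)² / θ₃(0)²` of the elliptic functions with nome `e^{-πt}`. -/
def modulus (t : ℝ) : ℝ := theta₂ t 0 ^ 2 / theta₃ t 0 ^ 2

/-- The rescaling factor `2K` between the theta variable and the elliptic argument: `θ₁(x)`
corresponds to `sn (frequency t * x)`. -/
def frequency (t : ℝ) : ℝ := theta₃ t 0 * deriv (theta₁ t) 0 / (theta₂ t 0 * theta₄ t 0)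

/-- The theta quotient representing `sn`, in the theta variable. -/
def thetaSn (t x : ℝ) : ℝ := theta₃ t 0 / theta₂ t 0 * (theta₁ t x / theta₄ t x)

/-- The theta quotient representing `cn`, in the theta variable. -/
def thetaCn (t x : ℝ) : ℝ := theta₄ t 0 / theta₂ t 0 * (theta₂ t x / theta₄ t x)

/-- The theta quotient representing `dn`, in the theta variable. -/
def thetaDn (t x : ℝ) : ℝ := theta₄ t 0 / theta₃ t 0 * (theta₃ t x / theta₄ t x)

lemma theta₃_zero_pow_four (ht : 0 < t) :
    theta₃ t 0 ^ 4 = theta₂ t 0 ^ 4 + theta₄ t 0 ^ 4 := by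
  linear_combination theta₃_zero_sq_mul_theta₃_sq ht 0

lemma one_sub_modulus_sq (ht : 0 < t) : 1 - modulus t ^ 2 = (theta₄ t 0 / theta₃ t 0) ^ 4 := by
  have := theta₃_pos ht 0
  have h4 := theta₃_zero_pow_four ht
  rw [modulus]
  field_simp
  linear_combination h4

lemma modulus_sq_lt_one (ht : 0 < t) : modulus t ^ 2 < 1 := by
  have := div_pos (theta₄_pos ht 0) (theta₃_pos ht 0)
  rw [← sub_pos, one_sub_modulus_sq ht]
  positivity

lemma modulus_mem_Ioo (ht : 0 < t) : modulus t ∈ Set.Ioo 0 1 := by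
  have hpos : 0 < modulus t :=
    div_pos (pow_pos (theta₂_zero_pos ht) 2) (pow_pos (theta₃_pos ht 0) 2)
  exact ⟨hpos, (sq_lt_one_iff₀ hpos.le).mp (modulus_sq_lt_one ht)⟩

lemma hasDerivAt_thetaSn (ht : 0 < t) (x : ℝ) :
    HasDerivAt (thetaSn t) (frequency t * (thetaCn t x * thetaDn t x)) x := by
  have h2 := theta₂_zero_pos ht
  have h3 := theta₃_pos ht 0
  have h4x := theta₄_pos ht x
  refine ((((differentiable_theta₁ ht x).hasDerivAt.fun_div
    (differentiable_theta₄ ht x).hasDerivAt h4x.ne')).const_mul _).congr_deriv ?_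
  have hW := wronskian_theta₁_theta₄ ht x
  simp only [frequency, thetaCn, thetaDn]
  field_simp
  linear_combination hW

lemma hasDerivAt_thetaCn (ht : 0 < t) (x : ℝ) :
    HasDerivAt (thetaCn t) (frequency t * -(thetaSn t x * thetaDn t x)) x := by
  have h2 := theta₂_zero_pos ht
  have h4 := theta₄_pos ht 0
  have h4x := theta₄_pos ht x
  refine ((((differentiable_theta₂ ht x).hasDerivAt.fun_div
    (differentiable_theta₄ ht x).hasDerivAt h4x.ne')).const_mul _).congr_deriv ?_
  have hW := wronskian_theta₂_theta₄ ht x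
  simp only [frequency, thetaSn, thetaDn]
  field_simp
  linear_combination hW

lemma hasDerivAt_thetaDn (ht : 0 < t) (x : ℝ) :
    HasDerivAt (thetaDn t) (frequency t * -(modulus t ^ 2 * thetaSn t x * thetaCn t x)) x := by
  have h3 := theta₃_pos ht 0
  have h4 := theta₄_pos ht 0
  have h4x := theta₄_pos ht x
  refine ((((differentiable_theta₃ ht x).hasDerivAt.fun_div
    (differentiable_theta₄ ht x).hasDerivAt h4x.ne')).const_mul _).congr_deriv ?_
  have hW := wronskian_theta₃_theta₄ ht x
  simp only [frequency, modulus, thetaSn, thetaCn]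
  field_simp
  linear_combination hW

lemma thetaSn_zero (t : ℝ) : thetaSn t 0 = 0 := by
  rw [thetaSn, theta₁_zero, zero_div, mul_zero]

lemma thetaSn_half (ht : 0 < t) : thetaSn t (1 / 2) = 1 := by
  have h2 := theta₂_zero_pos ht
  have h3 := theta₃_pos ht 0
  rw [thetaSn, ← zero_add (1 / 2 : ℝ), ← theta₂, ← theta₃]
  field_simp

lemma thetaCn_pos (ht : 0 < t) {x : ℝ} (hx : x ∈ Set.Ioo (-(1 / 2)) (1 / 2)) :
    0 < thetaCn t x :=
  mul_pos (div_pos (theta₄_pos ht 0) (theta₂_zero_pos ht))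
    (div_pos (theta₂_pos ht hx) (theta₄_pos ht x))

lemma thetaDn_pos (ht : 0 < t) (x : ℝ) : 0 < thetaDn t x :=
  mul_pos (div_pos (theta₄_pos ht 0) (theta₃_pos ht 0))
    (div_pos (theta₃_pos ht x) (theta₄_pos ht x))

/- `thetaSn` increases from `0` to `1` on `[0, 1 / 2]` and its derivative has the sign of
`frequency t` there. -/
lemma frequency_pos (ht : 0 < t) : 0 < frequency t := by
  obtain ⟨c, hc, hslope⟩ := exists_hasDerivAt_eq_slope (thetaSn t) _ one_half_pos
    (fun x _ ↦ (hasDerivAt_thetaSn ht x).continuousAt.continuousWithinAt)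
    fun x _ ↦ hasDerivAt_thetaSn ht x
  rw [thetaSn_half ht, thetaSn_zero] at hslope
  have hcn := thetaCn_pos ht (x := c) ⟨by linarith [hc.1], hc.2⟩
  refine pos_of_mul_pos_left ?_ (mul_pos hcn (thetaDn_pos ht c)).le
  rw [hslope]
  norm_num

lemma isJacobiElliptic_theta (ht : 0 < t) :
    IsJacobiElliptic (modulus t) (fun x ↦ thetaSn t (x / frequency t))
      (fun x ↦ thetaCn t (x / frequency t)) (fun x ↦ thetaDn t (x / frequency t)) := by
  have hf := (frequency_pos ht).ne'
  have rescale {F : ℝ → ℝ} {F' x : ℝ} (hF : HasDerivAt F (frequency t * F') (x / frequency t)) :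
      HasDerivAt (fun y ↦ F (y / frequency t)) F' x := by
    refine (hF.comp x ((hasDerivAt_id x).div_const (frequency t))).congr_deriv ?_
    field_simp
  have h2 := (theta₂_zero_pos ht).ne'
  have h3 := (theta₃_pos ht 0).ne'
  have h4 := (theta₄_pos ht 0).ne'
  exact
    { hasDerivAt_sn := fun x ↦ rescale (hasDerivAt_thetaSn ht _)
      hasDerivAt_cn := fun x ↦ rescale (hasDerivAt_thetaCn ht _)
      hasDerivAt_dn := fun x ↦ rescale (hasDerivAt_thetaDn ht _)
      sn_zero := by rw [zero_div, thetaSn_zero]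
      cn_zero := by rw [zero_div, thetaCn]; field_simp
      dn_zero := by rw [zero_div, thetaDn]; field_simp }

lemma Kcomp_modulus (ht : 0 < t) : Kcomp (modulus t) = frequency t / 2 := by
  have hf := frequency_pos ht
  refine (isJacobiElliptic_theta ht).Kcomp_eq (modulus_sq_lt_one ht) (by positivity) ?_
    (fun x hx ↦ thetaCn_pos ht ⟨?_, ?_⟩) fun x _ ↦ thetaDn_pos ht _
  · rw [div_div_cancel_left' hf.ne', ← one_div, thetaSn_half ht]
  · exact (by norm_num : (-(1 / 2) : ℝ) < 0).trans (div_pos hx.1 hf)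
  · rw [div_lt_iff₀ hf]
    linarith [hx.2]

/-! ### The nome of a given modulus -/

lemma tendsto_cosKernel_atTop (a : UnitAddCircle) : Tendsto (cosKernel a) atTop (𝓝 1) := by
  obtain ⟨p, hp, hO⟩ := isBigO_atTop_cosKernel_sub a
  have hexp : Tendsto (fun t : ℝ ↦ rexp (-p * t)) atTop (𝓝 0) :=
    Real.tendsto_exp_atBot.comp (tendsto_id.const_mul_atTop_of_neg (neg_neg_of_pos hp))
  simpa using (hO.trans_tendsto hexp).add_const 1

lemma tendsto_theta₃_zero_atTop : Tendsto (fun t ↦ theta₃ t 0) atTop (𝓝 1) :=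
  (tendsto_cosKernel_atTop _).congr' <| (eventually_gt_atTop 0).mono fun _ ht ↦
    (theta₃_eq_cosKernel ht 0).symm

lemma tendsto_theta₄_zero_atTop : Tendsto (fun t ↦ theta₄ t 0) atTop (𝓝 1) :=
  (tendsto_cosKernel_atTop _).congr' <| (eventually_gt_atTop 0).mono fun _ ht ↦
    (theta₄_zero_eq_cosKernel ht).symm

lemma modulus_eq_sqrt (ht : 0 < t) : modulus t = √(1 - (theta₄ t 0 / theta₃ t 0) ^ 4) := by
  rw [← one_sub_modulus_sq ht, sub_sub_cancel, Real.sqrt_sq (modulus_mem_Ioo ht).1.le]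

lemma tendsto_modulus_atTop : Tendsto modulus atTop (𝓝 0) := by
  have h := (((tendsto_theta₄_zero_atTop.div tendsto_theta₃_zero_atTop one_ne_zero).pow
    4).const_sub 1).sqrt
  simp only [div_one, one_pow, sub_self, Real.sqrt_zero] at h
  exact h.congr' <| (eventually_gt_atTop 0).mono fun _ ht ↦ (modulus_eq_sqrt ht).symm

lemma tendsto_frequency_atTop : Tendsto frequency atTop (𝓝 π) := by
  have h := (tendsto_Kcomp_nhds_zero.comp tendsto_modulus_atTop).const_mul 2
  rw [mul_div_cancel₀ π two_ne_zero] at h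
  refine h.congr' <| (eventually_gt_atTop 0).mono fun t ht ↦ ?_
  rw [Function.comp_apply, Kcomp_modulus ht, mul_div_cancel₀ _ two_ne_zero]

lemma frequency_div_theta₃_sq_two_mul (ht : 0 < t) :
    frequency (2 * t) / theta₃ (2 * t) 0 ^ 2 = frequency t / theta₃ t 0 ^ 2 := by
  have hW := wronskian_theta₁_theta₄_two_mul ht 0
  rw [theta₁_zero, zero_mul, sub_zero] at hW
  have h23 := theta₂_mul_theta₃_two_mul ht 0
  have h44 := theta₄_sq_two_mul ht 0
  calc frequency (2 * t) / theta₃ (2 * t) 0 ^ 2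
      = deriv (theta₁ (2 * t)) 0 * theta₄ (2 * t) 0 /
          (theta₂ (2 * t) 0 * theta₃ (2 * t) 0 * theta₄ (2 * t) 0 ^ 2) := by
        rw [frequency]; field_simp
    _ = 1 / 2 * (theta₂ t 0 * deriv (theta₁ t) 0) /
          (theta₂ t 0 * theta₂ t 0 / 2 * (theta₃ t 0 * theta₄ t 0)) := by
        rw [hW, h44, ← h23]; ring_nf
    _ = frequency t / theta₃ t 0 ^ 2 := by
        rw [frequency]; field_simp

lemma frequency_eq (ht : 0 < t) : frequency t = π * theta₃ t 0 ^ 2 := by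
  have hinvariant (n : ℕ) : frequency (2 ^ n * t) / theta₃ (2 ^ n * t) 0 ^ 2 =
      frequency t / theta₃ t 0 ^ 2 := by
    induction n with
    | zero => rw [pow_zero, one_mul]
    | succ n ih => rw [pow_succ', mul_assoc, frequency_div_theta₃_sq_two_mul (by positivity), ih]
  have hlim := tendsto_frequency_atTop.div (tendsto_theta₃_zero_atTop.pow 2) (by norm_num)
  have hpow : Tendsto (fun n : ℕ ↦ 2 ^ n * t) atTop atTop :=
    (tendsto_pow_atTop_atTop_of_one_lt one_lt_two).atTop_mul_const ht
  have hconst := tendsto_nhds_unique (tendsto_const_nhds.congr fun n ↦ (hinvariant n).symm)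
    (hlim.comp hpow)
  rw [one_pow, div_one] at hconst
  exact (div_eq_iff (pow_pos (theta₃_pos ht 0) 2).ne').mp hconst

lemma frequency_one_div (ht : 0 < t) : frequency (1 / t) = t * frequency t := by
  rw [frequency_eq (one_div_pos.mpr ht), frequency_eq ht, theta₃_one_div_zero ht, mul_pow,
    Real.sq_sqrt ht.le]
  ring

lemma modulus_one_div (ht : 0 < t) : modulus (1 / t) = √(1 - modulus t ^ 2) := by
  rw [one_sub_modulus_sq ht, show (theta₄ t 0 / theta₃ t 0) ^ 4 =
    ((theta₄ t 0 / theta₃ t 0) ^ 2) ^ 2 by ring, Real.sqrt_sq (sq_nonneg _), modulus,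
    theta₂_one_div_zero ht, theta₃_one_div_zero ht]
  field_simp

lemma Kcomp_ratio_modulus (ht : 0 < t) :
    Kcomp √(1 - modulus t ^ 2) / Kcomp (modulus t) = t := by
  have := frequency_pos ht
  rw [← modulus_one_div ht, Kcomp_modulus (one_div_pos.mpr ht), Kcomp_modulus ht,
    frequency_one_div ht]
  field_simp

lemma Kcomp_ratio_pos {k : ℝ} (hk : k ∈ Set.Ioo 0 1) : 0 < Kcomp √(1 - k ^ 2) / Kcomp k := by
  have hk2 : k ^ 2 < 1 := (sq_lt_one_iff₀ hk.1.le).mpr hk.2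
  have hk2' : √(1 - k ^ 2) ^ 2 < 1 := by
    rw [Real.sq_sqrt (sub_nonneg.mpr hk2.le)]
    exact sub_lt_self _ (pow_pos hk.1 2)
  exact div_pos (Kcomp_pos hk2') (Kcomp_pos hk2)

lemma modulus_Kcomp_ratio {k : ℝ} (hk : k ∈ Set.Ioo 0 1) :
    modulus (Kcomp √(1 - k ^ 2) / Kcomp k) = k :=
  have ht := Kcomp_ratio_pos hk
  strictAntiOn_Kcomp_ratio.injOn (modulus_mem_Ioo ht) hk (Kcomp_ratio_modulus ht)

/-! ### The quotient identity and the asymptotics of the breather -/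

lemma Hf_eq_theta₁ (k x : ℝ) :
    Hf k x = theta₁ (Kcomp √(1 - k ^ 2) / Kcomp k) (x / (2 * Kcomp k)) := by
  rw [Hf, nome, theta₁, mul_div_assoc, mul_div_assoc]

lemma THf_eq_theta₄ (k x : ℝ) :
    THf k x = theta₄ (Kcomp √(1 - k ^ 2) / Kcomp k) (x / (2 * Kcomp k)) := by
  rw [THf, nome, theta₄, mul_div_assoc, mul_div_assoc]

lemma THf_pos {k : ℝ} (hk : k ∈ Set.Ioo 0 1) (x : ℝ) : 0 < THf k x :=
  THf_eq_theta₄ k x ▸ theta₄_pos (Kcomp_ratio_pos hk) _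

lemma modulus_mul_thetaSn (t x : ℝ) :
    modulus t * thetaSn t x = theta₁ t (1 / 2) / theta₄ t (1 / 2) * theta₁ t x / theta₄ t x := by
  rw [← zero_add (1 / 2 : ℝ), ← theta₂, ← theta₃, modulus, thetaSn]
  field_simp

lemma IsJacobiElliptic.modulus_mul_sn_eq {k : ℝ} (hk : k ∈ Set.Ioo 0 1) {sn cn dn : ℝ → ℝ}
    (h : IsJacobiElliptic k sn cn dn) (x : ℝ) :
    k * sn x = Hf k (Kcomp k) / THf k (Kcomp k) * Hf k x / THf k x := by
  have hmod := modulus_Kcomp_ratio hk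
  have ht := Kcomp_ratio_pos hk
  have hK : 0 < Kcomp k := Kcomp_pos ((sq_lt_one_iff₀ hk.1.le).mpr hk.2)
  simp only [Hf_eq_theta₁, THf_eq_theta₄]
  generalize Kcomp √(1 - k ^ 2) / Kcomp k = t at hmod ht ⊢
  subst hmod
  have hfreq : frequency t = 2 * Kcomp (modulus t) := by rw [Kcomp_modulus ht]; ring
  rw [h.sn_unique (isJacobiElliptic_theta ht), modulus_mul_thetaSn, hfreq,
    div_mul_cancel_right₀ hK.ne', one_div]

lemma tendsto_exp_quotient_atTop (c A B C A' C' : ℝ) {B' : ℝ} (hB' : B' ≠ 0) :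
    Tendsto (fun η ↦ c * (A * rexp (-(2 * η)) + B * rexp (2 * η) + C) /
      (A' * rexp (-(2 * η)) + B' * rexp (2 * η) + C')) atTop (𝓝 (c * B / B')) := by
  have hexp : Tendsto (fun η : ℝ ↦ rexp (-(2 * η))) atTop (𝓝 0) :=
    Real.tendsto_exp_neg_atTop_nhds_zero.comp (tendsto_id.const_mul_atTop two_pos)
  have hlim (a b d : ℝ) : Tendsto (fun η ↦ a * rexp (-(2 * η)) ^ 2 + b + d * rexp (-(2 * η)))
      atTop (𝓝 b) := by
    simpa using (((hexp.pow 2).const_mul a).add_const b).add (hexp.const_mul d)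
  refine (((hlim A B C).const_mul c).div (hlim A' B' C') hB').congr fun η ↦ ?_
  have hscale (a b d : ℝ) : a * rexp (-(2 * η)) ^ 2 + b + d * rexp (-(2 * η)) =
      (a * rexp (-(2 * η)) + b * rexp (2 * η) + d) * rexp (-(2 * η)) := by
    have : rexp (2 * η) * rexp (-(2 * η)) = 1 := by
      rw [← Real.exp_add, add_neg_cancel, Real.exp_zero]
    linear_combination -b * this
  rw [Pi.div_apply, hscale, hscale, ← mul_assoc, mul_div_mul_right _ _ (Real.exp_pos _).ne']

lemma tendsto_exp_quotient_atBot (c A B C B' C' : ℝ) {A' : ℝ} (hA' : A' ≠ 0) :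
    Tendsto (fun η ↦ c * (A * rexp (-(2 * η)) + B * rexp (2 * η) + C) /
      (A' * rexp (-(2 * η)) + B' * rexp (2 * η) + C')) atBot (𝓝 (c * A / A')) := by
  refine ((tendsto_exp_quotient_atTop c B A C B' C' hA').comp tendsto_neg_atBot_atTop).congr
    fun η ↦ ?_
  rw [Function.comp_apply, mul_neg, neg_neg, add_comm (B * _), add_comm (B' * _)]

end DarkBreather

theorem dark_breather_asymptotics_general
    {k : ℝ} (hk : k ∈ Set.Ioo 0 1) {sn cn dn : ℝ → ℝ}
    (h : DarkBreather.IsJacobiElliptic k sn cn dn) (α ξ : ℝ) :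
    Filter.Tendsto (Fquot k sn α ξ) Filter.atTop (nhds (k * sn (ξ - 2 * α))) ∧
    Filter.Tendsto (Fquot k sn α ξ) Filter.atBot (nhds (k * sn (ξ + 2 * α))) := by
  rw [h.modulus_mul_sn_eq hk, h.modulus_mul_sn_eq hk]
  exact ⟨DarkBreather.tendsto_exp_quotient_atTop _ _ _ _ _ _ (DarkBreather.THf_pos hk _).ne',
    DarkBreather.tendsto_exp_quotient_atBot _ _ _ _ _ _ (DarkBreather.THf_pos hk _).ne'⟩

/-- Far from its core the dark breather approaches translates of the snoidal background:
`F(η) → k·sn(ξ − 2α; k)` as `η → +∞` and `F(η) → k·sn(ξ + 2α; k)` as `η → −∞`. -/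
theorem dark_breather_asymptotics
    (k : ℝ) (hk : k ∈ Set.Ioo (0 : ℝ) 1)
    (sn cn dn : ℝ → ℝ)
    (hsn : ∀ x, HasDerivAt sn (cn x * dn x) x)
    (hcn : ∀ x, HasDerivAt cn (-(sn x * dn x)) x)
    (hdn : ∀ x, HasDerivAt dn (-(k ^ 2 * sn x * cn x)) x)
    (hsn0 : sn 0 = 0) (hcn0 : cn 0 = 1) (hdn0 : dn 0 = 1)
    (α : ℝ) (hα : α ∈ Set.Ioo 0 (Kcomp k)) (ξ : ℝ) :
    Filter.Tendsto (Fquot k sn α ξ) Filter.atTop (nhds (k * sn (ξ - 2 * α))) ∧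
    Filter.Tendsto (Fquot k sn α ξ) Filter.atBot (nhds (k * sn (ξ + 2 * α))) :=
  dark_breather_asymptotics_general hk ⟨hsn, hcn, hdn, hsn0, hcn0, hdn0⟩ α ξ

end
end

section
/- Let α > 0 and x₀ ∈ ℝ. For (x,t) ∈ ℝ² set ξ := x + 2t and η := tanh(2α)·(x + 2t + 4t·sech²(2α) + x₀). Then the denominator D(x,t) := cosh(ξ+2α)e^{−2η} + cosh(ξ−2α)e^{2η} + 2cosh(ξ)cosh(2α) is strictly positive everywhere, and the function û(x,t) := ( sinh(ξ+2α)e^{−2η} + sinh(ξ−2α)e^{2η} + 2sinh(ξ)(1 − sinh²(2α))·sech(2α) ) / D(x,t) is smooth on ℝ × ℝ and satisfies the mKdV equation û_t − 6û²û_x + û_xxx = 0 at every point (x,t). This is the two-soliton solution obtained from the dark breather in the limit k → 1. -/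
noncomputable section

/-- Partial derivative in the first (spatial) variable. -/
def ux (u : ℝ × ℝ → ℝ) (p : ℝ × ℝ) : ℝ := deriv (fun y => u (y, p.2)) p.1

/-- Partial derivative in the second (temporal) variable. -/
def ut (u : ℝ × ℝ → ℝ) (p : ℝ × ℝ) : ℝ := deriv (fun s => u (p.1, s)) p.2

/-- The traveling variable `ξ = x + 2t`. -/
def xiTS (w : ℝ × ℝ) : ℝ := w.1 + 2 * w.2

/-- The variable `η = tanh(2α)(x + 2t + 4t·sech²(2α) + x₀)`. -/
def etaTS (α x₀ : ℝ) (w : ℝ × ℝ) : ℝ :=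
  Real.tanh (2 * α) * (w.1 + 2 * w.2 + 4 * w.2 * (1 / Real.cosh (2 * α)) ^ 2 + x₀)

/-- The denominator of the two-soliton solution. -/
def DdenTS (α x₀ : ℝ) (w : ℝ × ℝ) : ℝ :=
  Real.cosh (xiTS w + 2 * α) * Real.exp (-(2 * etaTS α x₀ w)) +
  Real.cosh (xiTS w - 2 * α) * Real.exp (2 * etaTS α x₀ w) +
  2 * Real.cosh (xiTS w) * Real.cosh (2 * α)

/-- The two-soliton solution of the defocusing mKdV equation obtained from the dark
breather in the limit `k → 1`. -/
def uhatTS (α x₀ : ℝ) (w : ℝ × ℝ) : ℝ :=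
  (Real.sinh (xiTS w + 2 * α) * Real.exp (-(2 * etaTS α x₀ w)) +
   Real.sinh (xiTS w - 2 * α) * Real.exp (2 * etaTS α x₀ w) +
   2 * Real.sinh (xiTS w) * (1 - Real.sinh (2 * α) ^ 2) * (1 / Real.cosh (2 * α))) /
  DdenTS α x₀ w

/-!
The solution is the logarithmic derivative `û = ψₓ / ψ` of
`ψ = cosh ξ - tanh (2α) tanh η sinh ξ`, the Darboux transform of `sinh ξ`. This `ψ` solves both
equations of the KdV Lax pair, `ψₓₓ = v ψ` and `ψₜ = 2 v ψₓ - vₓ ψ`, for the KdV soliton potential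
`v = 1 - 2 tanh² (2α) sech² η`. The first equation becomes the Riccati equation `uₓ = v - u²` for
`u = ψₓ / ψ` (Miura's transformation) and the second becomes `uₜ = (2 v u - vₓ)ₓ`. Eliminating `v`
between these two leaves exactly the mKdV equation.
-/

/-- `f'` is the partial derivative of `f` in the first (spatial) variable on the whole plane. Unlike
an equation `ux f = f'`, this asserts that the derivative exists. -/
def HasPartialX (f f' : ℝ × ℝ → ℝ) : Prop :=
  ∀ w : ℝ × ℝ, HasDerivAt (fun y => f (y, w.2)) (f' w) w.1

/-- `f'` is the partial derivative of `f` in the second (temporal) variable on the whole plane.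
Unlike an equation `ut f = f'`, this asserts that the derivative exists. -/
def HasPartialT (f f' : ℝ × ℝ → ℝ) : Prop :=
  ∀ w : ℝ × ℝ, HasDerivAt (fun s => f (w.1, s)) (f' w) w.2

/-- `u` satisfies the defocusing mKdV equation at every point. As `ux` and `ut` are built on
`deriv`, this is meaningful only for functions that have the derivatives in question. -/
def SolvesMKdV (u : ℝ × ℝ → ℝ) : Prop :=
  ∀ w : ℝ × ℝ, ut u w - 6 * u w ^ 2 * ux u w + ux (ux (ux u)) w = 0

/-- `ψ` is a nowhere vanishing solution of the KdV Lax pair `ψₓₓ = v ψ`, `ψₜ = 2 v ψₓ - vₓ ψ` with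
potential `v`. It is encoded as a first-order system for `(ψ, χ)` with `χ = ψₓ`, where `v'` and
`v''` are the first two spatial derivatives of `v`. The equation for `χₜ` is the spatial derivative
of the one for `ψₜ`; including it avoids exchanging mixed partial derivatives. -/
structure SolvesKdVLaxPair (v v' v'' ψ χ : ℝ × ℝ → ℝ) : Prop where
  potential_x : HasPartialX v v'
  potential_xx : HasPartialX v' v''
  wave_ne_zero : ∀ w, ψ w ≠ 0
  wave_x : HasPartialX ψ χ
  wave_xx : HasPartialX χ (fun w => v w * ψ w)
  wave_t : HasPartialT ψ (fun w => 2 * v w * χ w - v' w * ψ w)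
  wave_xt : HasPartialT χ (fun w => (2 * v w ^ 2 - v'' w) * ψ w + v' w * χ w)

theorem HasPartialX.ux_eq {f f' : ℝ × ℝ → ℝ} (hf : HasPartialX f f') : ux f = f' :=
  funext fun w => (hf w).deriv

theorem HasPartialT.ut_eq {f f' : ℝ × ℝ → ℝ} (hf : HasPartialT f f') : ut f = f' :=
  funext fun w => (hf w).deriv

section Miura

variable {u v v' v'' ψ χ : ℝ × ℝ → ℝ}

theorem HasPartialX.riccati_second (hv : HasPartialX v v')
    (hu : HasPartialX u (fun w => v w - u w ^ 2)) :
    HasPartialX (fun w => v w - u w ^ 2) (fun w => v' w - 2 * u w * (v w - u w ^ 2)) := fun w =>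
  ((hv w).fun_sub ((hu w).fun_pow 2)).congr_deriv (by ring)

theorem HasPartialX.riccati_third (hv : HasPartialX v v') (hv' : HasPartialX v' v'')
    (hu : HasPartialX u (fun w => v w - u w ^ 2)) :
    HasPartialX (fun w => v' w - 2 * u w * (v w - u w ^ 2))
      (fun w => v'' w - 2 * (v w - u w ^ 2) ^ 2
        - 2 * u w * (v' w - 2 * u w * (v w - u w ^ 2))) := fun w =>
  ((hv' w).fun_sub (((hu w).const_mul 2).fun_mul (hv.riccati_second hu w))).congr_deriv (by ring)

theorem solvesMKdV_of_riccati (hv : HasPartialX v v') (hv' : HasPartialX v' v'')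
    (hux : HasPartialX u (fun w => v w - u w ^ 2))
    (hut : HasPartialT u (fun w => 2 * v w * (v w - u w ^ 2) + 2 * v' w * u w - v'' w)) :
    SolvesMKdV u := by
  intro w
  rw [hut.ut_eq, hux.ux_eq, (hv.riccati_second hux).ux_eq, (hv.riccati_third hv' hux).ux_eq]
  ring

namespace SolvesKdVLaxPair

theorem logDeriv_x (h : SolvesKdVLaxPair v v' v'' ψ χ) :
    HasPartialX (fun w => χ w / ψ w) (fun w => v w - (χ w / ψ w) ^ 2) := fun w => by
  have hψ : ψ w ≠ 0 := h.wave_ne_zero w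
  refine ((h.wave_xx w).fun_div (h.wave_x w) hψ).congr_deriv ?_
  field_simp

theorem logDeriv_t (h : SolvesKdVLaxPair v v' v'' ψ χ) :
    HasPartialT (fun w => χ w / ψ w)
      (fun w => 2 * v w * (v w - (χ w / ψ w) ^ 2) + 2 * v' w * (χ w / ψ w) - v'' w) := fun w => by
  have hψ : ψ w ≠ 0 := h.wave_ne_zero w
  refine ((h.wave_xt w).fun_div (h.wave_t w) hψ).congr_deriv ?_
  field_simp
  ring

theorem solvesMKdV_logDeriv (h : SolvesKdVLaxPair v v' v'' ψ χ) :
    SolvesMKdV (fun w => χ w / ψ w) :=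
  solvesMKdV_of_riccati h.potential_x h.potential_xx h.logDeriv_x h.logDeriv_t

end SolvesKdVLaxPair

end Miura

theorem one_div_cosh_sq (x : ℝ) : (1 / Real.cosh x) ^ 2 = 1 - Real.tanh x ^ 2 := by
  have hcosh : Real.cosh x ≠ 0 := (Real.cosh_pos x).ne'
  rw [Real.tanh_eq_sinh_div_cosh]
  field_simp
  linear_combination -Real.cosh_sq x

theorem exp_two_mul_eq_cosh_add_sinh_sq (x : ℝ) :
    Real.exp (2 * x) = (Real.cosh x + Real.sinh x) ^ 2 := by
  rw [Real.cosh_add_sinh, ← Real.exp_nat_mul, Nat.cast_ofNat]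

theorem exp_neg_two_mul_eq_cosh_sub_sinh_sq (x : ℝ) :
    Real.exp (-(2 * x)) = (Real.cosh x - Real.sinh x) ^ 2 := by
  rw [Real.cosh_sub_sinh, ← Real.exp_nat_mul, Nat.cast_ofNat, mul_neg]

theorem hasDerivAt_tanh_comp {f : ℝ → ℝ} {f' x : ℝ} (hf : HasDerivAt f f' x) :
    HasDerivAt (fun y => Real.tanh (f y)) ((1 - Real.tanh (f x) ^ 2) * f') x := by
  have hcosh : Real.cosh (f x) ≠ 0 := (Real.cosh_pos _).ne'
  simp only [Real.tanh_eq_sinh_div_cosh]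
  refine (hf.sinh.fun_div hf.cosh hcosh).congr_deriv ?_
  field_simp

section Darboux

/-- The KdV soliton potential `κ² - 2 k² sech² η` on the background `κ²`, as a function of the phase
`η`, with `sech²` written as `1 - tanh²`. -/
def solitonPotential (κ k η : ℝ) : ℝ := κ ^ 2 - 2 * k ^ 2 * (1 - Real.tanh η ^ 2)

/-- The Darboux transform `(∂ₓ - k tanh η) sinh ξ` of the free wave `sinh ξ`, where `ξₓ = κ`. It
solves the Schrödinger equation with potential `solitonPotential κ k η` when `ηₓ = k`. -/
def darbouxWave (κ k ξ η : ℝ) : ℝ := κ * Real.cosh ξ - k * Real.tanh η * Real.sinh ξ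

/-- The spatial derivative of `darbouxWave κ k ξ η`, for phases with `ξₓ = κ` and `ηₓ = k`. -/
def darbouxWaveX (κ k ξ η : ℝ) : ℝ :=
  κ ^ 2 * Real.sinh ξ - κ * k * Real.tanh η * Real.cosh ξ
    - k ^ 2 * (1 - Real.tanh η ^ 2) * Real.sinh ξ

variable {κ k x ξ' η' : ℝ} {ξ η : ℝ → ℝ}

theorem hasDerivAt_solitonPotential (hη : HasDerivAt η η' x) :
    HasDerivAt (fun y => solitonPotential κ k (η y))
      (4 * k ^ 2 * Real.tanh (η x) * (1 - Real.tanh (η x) ^ 2) * η') x := by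
  have htanh := hasDerivAt_tanh_comp hη
  refine ((((htanh.fun_pow 2).const_sub 1).const_mul (2 * k ^ 2)).const_sub (κ ^ 2)).congr_deriv ?_
  ring

theorem hasDerivAt_darbouxWave (hξ : HasDerivAt ξ ξ' x) (hη : HasDerivAt η η' x) :
    HasDerivAt (fun y => darbouxWave κ k (ξ y) (η y))
      ((κ * Real.sinh (ξ x) - k * Real.tanh (η x) * Real.cosh (ξ x)) * ξ'
        - k * (1 - Real.tanh (η x) ^ 2) * Real.sinh (ξ x) * η') x := by
  have htanh := hasDerivAt_tanh_comp hη
  refine ((hξ.cosh.const_mul κ).fun_sub ((htanh.const_mul k).fun_mul hξ.sinh)).congr_deriv ?_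
  ring

theorem hasDerivAt_darbouxWaveX (hξ : HasDerivAt ξ ξ' x) (hη : HasDerivAt η η' x) :
    HasDerivAt (fun y => darbouxWaveX κ k (ξ y) (η y))
      ((κ ^ 2 * Real.cosh (ξ x) - κ * k * Real.tanh (η x) * Real.sinh (ξ x)
          - k ^ 2 * (1 - Real.tanh (η x) ^ 2) * Real.cosh (ξ x)) * ξ'
        + (2 * k ^ 2 * Real.tanh (η x) * Real.sinh (ξ x) - κ * k * Real.cosh (ξ x))
          * (1 - Real.tanh (η x) ^ 2) * η') x := by
  have htanh := hasDerivAt_tanh_comp hη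
  refine (((hξ.sinh.const_mul (κ ^ 2)).fun_sub
    ((htanh.const_mul (κ * k)).fun_mul hξ.cosh)).fun_sub
    ((((htanh.fun_pow 2).const_sub 1).const_mul (k ^ 2)).fun_mul hξ.sinh)).congr_deriv ?_
  ring

end Darboux

theorem solvesKdVLaxPair_darbouxWave {κ k : ℝ} {ξ η : ℝ × ℝ → ℝ}
    (hξx : HasPartialX ξ fun _ => κ) (hξt : HasPartialT ξ fun _ => 2 * κ ^ 3)
    (hηx : HasPartialX η fun _ => k) (hηt : HasPartialT η fun _ => k * (6 * κ ^ 2 - 4 * k ^ 2))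
    (hψ : ∀ w, darbouxWave κ k (ξ w) (η w) ≠ 0) :
    SolvesKdVLaxPair (fun w => solitonPotential κ k (η w))
      (fun w => 4 * k ^ 3 * Real.tanh (η w) * (1 - Real.tanh (η w) ^ 2))
      (fun w => 4 * k ^ 4 * (1 - Real.tanh (η w) ^ 2) * (1 - 3 * Real.tanh (η w) ^ 2))
      (fun w => darbouxWave κ k (ξ w) (η w)) (fun w => darbouxWaveX κ k (ξ w) (η w)) where
  potential_x w := (hasDerivAt_solitonPotential (hηx w)).congr_deriv (by ring)
  potential_xx w := by
    have htanh := hasDerivAt_tanh_comp (hηx w)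
    exact ((htanh.const_mul (4 * k ^ 3)).fun_mul ((htanh.fun_pow 2).const_sub 1)).congr_deriv
      (by ring)
  wave_ne_zero := hψ
  wave_x w := (hasDerivAt_darbouxWave (hξx w) (hηx w)).congr_deriv (by
    simp only [darbouxWaveX]
    ring)
  wave_xx w := (hasDerivAt_darbouxWaveX (hξx w) (hηx w)).congr_deriv (by
    simp only [solitonPotential, darbouxWave]
    ring)
  wave_t w := (hasDerivAt_darbouxWave (hξt w) (hηt w)).congr_deriv (by
    simp only [solitonPotential, darbouxWave, darbouxWaveX]
    ring)
  wave_xt w := (hasDerivAt_darbouxWaveX (hξt w) (hηt w)).congr_deriv (by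
    simp only [solitonPotential, darbouxWave, darbouxWaveX]
    ring)

section TwoSoliton

theorem hasPartialX_xiTS : HasPartialX xiTS fun _ => 1 := fun w =>
  (hasDerivAt_id w.1).add_const (2 * w.2)

theorem hasPartialT_xiTS : HasPartialT xiTS fun _ => 2 := fun w =>
  (((hasDerivAt_id w.2).const_mul 2).const_add w.1).congr_deriv (mul_one 2)

variable (α x₀ : ℝ)

theorem etaTS_eq (w : ℝ × ℝ) :
    etaTS α x₀ w
      = Real.tanh (2 * α) * (w.1 + (6 - 4 * Real.tanh (2 * α) ^ 2) * w.2 + x₀) := by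
  rw [etaTS, one_div_cosh_sq]
  ring

theorem hasPartialX_etaTS : HasPartialX (etaTS α x₀) fun _ => Real.tanh (2 * α) := fun w => by
  simp only [etaTS_eq]
  exact ((((hasDerivAt_id w.1).add_const _).add_const x₀).const_mul _).congr_deriv (mul_one _)

theorem hasPartialT_etaTS :
    HasPartialT (etaTS α x₀) fun _ => Real.tanh (2 * α) * (6 - 4 * Real.tanh (2 * α) ^ 2) :=
  fun w => by
    simp only [etaTS_eq]
    refine (((((hasDerivAt_id w.2).const_mul _).const_add w.1).add_const x₀).const_mul
      _).congr_deriv ?_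
    rw [mul_one]

theorem DdenTS_pos (w : ℝ × ℝ) : 0 < DdenTS α x₀ w := by
  unfold DdenTS
  positivity

theorem contDiff_uhatTS : ContDiff ℝ (⊤ : ℕ∞) (uhatTS α x₀) := by
  have hden : ContDiff ℝ (⊤ : ℕ∞) (DdenTS α x₀) := by
    unfold DdenTS xiTS etaTS
    fun_prop
  refine ContDiff.div ?_ hden fun w => (DdenTS_pos α x₀ w).ne'
  unfold xiTS etaTS
  fun_prop

theorem DdenTS_eq_mul_darbouxWave (w : ℝ × ℝ) :
    DdenTS α x₀ w = 4 * Real.cosh (2 * α) * Real.cosh (etaTS α x₀ w) ^ 2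
      * darbouxWave 1 (Real.tanh (2 * α)) (xiTS w) (etaTS α x₀ w) := by
  rw [DdenTS, darbouxWave]
  generalize xiTS w = ξ, etaTS α x₀ w = η
  have hcosh_α : Real.cosh (2 * α) ≠ 0 := (Real.cosh_pos _).ne'
  have hcosh_η : Real.cosh η ≠ 0 := (Real.cosh_pos _).ne'
  rw [Real.cosh_add, Real.cosh_sub, exp_two_mul_eq_cosh_add_sinh_sq,
    exp_neg_two_mul_eq_cosh_sub_sinh_sq, Real.tanh_eq_sinh_div_cosh, Real.tanh_eq_sinh_div_cosh]
  field_simp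
  linear_combination -2 * Real.cosh ξ * Real.cosh (2 * α) * Real.cosh_sq η

theorem uhatTS_num_eq_mul_darbouxWaveX (w : ℝ × ℝ) :
    Real.sinh (xiTS w + 2 * α) * Real.exp (-(2 * etaTS α x₀ w)) +
      Real.sinh (xiTS w - 2 * α) * Real.exp (2 * etaTS α x₀ w) +
      2 * Real.sinh (xiTS w) * (1 - Real.sinh (2 * α) ^ 2) * (1 / Real.cosh (2 * α))
    = 4 * Real.cosh (2 * α) * Real.cosh (etaTS α x₀ w) ^ 2
      * darbouxWaveX 1 (Real.tanh (2 * α)) (xiTS w) (etaTS α x₀ w) := by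
  rw [darbouxWaveX]
  generalize xiTS w = ξ, etaTS α x₀ w = η
  have hcosh_α : Real.cosh (2 * α) ≠ 0 := (Real.cosh_pos _).ne'
  have hcosh_η : Real.cosh η ≠ 0 := (Real.cosh_pos _).ne'
  rw [Real.sinh_add, Real.sinh_sub, exp_two_mul_eq_cosh_add_sinh_sq,
    exp_neg_two_mul_eq_cosh_sub_sinh_sq, Real.tanh_eq_sinh_div_cosh, Real.tanh_eq_sinh_div_cosh]
  field_simp
  linear_combination
    2 * Real.sinh ξ * (2 * Real.sinh (2 * α) ^ 2 - Real.cosh (2 * α) ^ 2) * Real.cosh_sq η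
      - 2 * Real.sinh ξ * Real.cosh_sq (2 * α)

theorem darbouxWave_xiTS_etaTS_ne_zero (w : ℝ × ℝ) :
    darbouxWave 1 (Real.tanh (2 * α)) (xiTS w) (etaTS α x₀ w) ≠ 0 := by
  have hden := (DdenTS_pos α x₀ w).ne'
  rw [DdenTS_eq_mul_darbouxWave] at hden
  exact right_ne_zero_of_mul hden

theorem uhatTS_eq_darbouxWaveX_div_darbouxWave :
    uhatTS α x₀ = fun w =>
      darbouxWaveX 1 (Real.tanh (2 * α)) (xiTS w) (etaTS α x₀ w)
        / darbouxWave 1 (Real.tanh (2 * α)) (xiTS w) (etaTS α x₀ w) := by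
  funext w
  rw [uhatTS, uhatTS_num_eq_mul_darbouxWaveX, DdenTS_eq_mul_darbouxWave]
  exact mul_div_mul_left _ _ (by positivity)

theorem solvesMKdV_uhatTS : SolvesMKdV (uhatTS α x₀) := by
  rw [uhatTS_eq_darbouxWaveX_div_darbouxWave]
  refine (solvesKdVLaxPair_darbouxWave hasPartialX_xiTS ?_ (hasPartialX_etaTS α x₀) ?_
    (darbouxWave_xiTS_etaTS_ne_zero α x₀)).solvesMKdV_logDeriv
  · simpa using hasPartialT_xiTS
  · simpa using hasPartialT_etaTS α x₀

end TwoSoliton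

/-- The two-soliton solution: its denominator is strictly positive everywhere, and `û`
is a smooth solution of the defocusing mKdV equation `û_t − 6û²û_x + û_xxx = 0`. -/
theorem two_soliton_solves_mkdv (α : ℝ) (hα : 0 < α) (x₀ : ℝ) :
    (∀ w : ℝ × ℝ, 0 < DdenTS α x₀ w) ∧
    ContDiff ℝ (⊤ : ℕ∞) (uhatTS α x₀) ∧
    (∀ w : ℝ × ℝ,
      ut (uhatTS α x₀) w
      - 6 * (uhatTS α x₀ w) ^ 2 * ux (uhatTS α x₀) w
      + ux (ux (ux (uhatTS α x₀))) w = 0) := by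
  exact ⟨DdenTS_pos α x₀, contDiff_uhatTS α x₀, solvesMKdV_uhatTS α x₀⟩

end
end
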